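/- arXiv:2110.08836 — 3 statements merged into one kernel-verified Lean document; each statement's English description precedes it below -/
import Mathlib

section
/- Let W₁, W₂ be regular bivariate matrix pencils (i.e., p₁ and p₂ are not the zero polynomial), let (λ₀,μ₀) ∈ ℂ² be a finite eigenvalue of the two-parameter problem, and assume the genericity conditions (1)–(6) hold at (λ₀,μ₀). Then (λ₀,μ₀) is a finite eigenvalue of the associated pair of pencils (Δ₁ − λΔ₀, Δ₂ − μΔ₀). -/
open Matrix Kronecker

noncomputable section

def vkron {n₁ n₂ : ℕ} (x : Fin n₁ → ℂ) (y : Fin n₂ → ℂ) : Fin n₁ × Fin n₂ → ℂ :=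
  fun p => x p.1 * y p.2

def GKer {N : Type*} [Fintype N] (A B : Matrix N N ℂ) (ξ : ℂ) :
    Submodule ℂ (N → ℂ) :=
  Submodule.span ℂ {v | ∃ p : N → Polynomial ℂ,
    (∀ t : ℂ, (A - t • B).mulVec (fun i => (p i).eval t) = 0) ∧
    v = fun i => (p i).eval ξ}

def RedMin {N : Type*} [Fintype N] (A B : Matrix N N ℂ) : Submodule ℂ (N → ℂ) :=
  Submodule.span ℂ (⋃ ξ : ℂ, (GKer A B ξ : Set (N → ℂ)))

def nrank {N : Type*} [Fintype N] (A B : Matrix N N ℂ) : ℕ :=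
  ⨆ ξ : ℂ, (A - ξ • B).rank

def Wmat {n : ℕ} (A B C : Matrix (Fin n) (Fin n) ℂ) (l m : ℂ) :
    Matrix (Fin n) (Fin n) ℂ := A + l • B + m • C

def charPoly {n : ℕ} (A B C : Matrix (Fin n) (Fin n) ℂ) : MvPolynomial (Fin 2) ℂ :=
  Matrix.det (Matrix.of fun i j =>
    MvPolynomial.C (A i j) + MvPolynomial.X 0 * MvPolynomial.C (B i j)
      + MvPolynomial.X 1 * MvPolynomial.C (C i j))

def ev2 (p : MvPolynomial (Fin 2) ℂ) (l m : ℂ) : ℂ := MvPolynomial.eval ![l, m] p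

def Delta0 {n₁ n₂ : ℕ} (B₁ C₁ : Matrix (Fin n₁) (Fin n₁) ℂ)
    (B₂ C₂ : Matrix (Fin n₂) (Fin n₂) ℂ) :
    Matrix (Fin n₁ × Fin n₂) (Fin n₁ × Fin n₂) ℂ :=
  B₁ ⊗ₖ C₂ - C₁ ⊗ₖ B₂

def Delta1 {n₁ n₂ : ℕ} (A₁ C₁ : Matrix (Fin n₁) (Fin n₁) ℂ)
    (A₂ C₂ : Matrix (Fin n₂) (Fin n₂) ℂ) :
    Matrix (Fin n₁ × Fin n₂) (Fin n₁ × Fin n₂) ℂ :=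
  C₁ ⊗ₖ A₂ - A₁ ⊗ₖ C₂

def Delta2 {n₁ n₂ : ℕ} (A₁ B₁ : Matrix (Fin n₁) (Fin n₁) ℂ)
    (A₂ B₂ : Matrix (Fin n₂) (Fin n₂) ℂ) :
    Matrix (Fin n₁ × Fin n₂) (Fin n₁ × Fin n₂) ℂ :=
  A₁ ⊗ₖ B₂ - B₁ ⊗ₖ A₂

/-- `(λ₀,μ₀)` is a finite eigenvalue of the two-parameter problem. -/
def IsFiniteEigW {n₁ n₂ : ℕ}
    (A₁ B₁ C₁ : Matrix (Fin n₁) (Fin n₁) ℂ) (A₂ B₂ C₂ : Matrix (Fin n₂) (Fin n₂) ℂ)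
    (l₀ m₀ : ℂ) : Prop :=
  (∀ q : MvPolynomial (Fin 2) ℂ,
      q ∣ charPoly A₁ B₁ C₁ → q ∣ charPoly A₂ B₂ C₂ →
      (¬ ∃ c : ℂ, q = MvPolynomial.C c) → ev2 q l₀ m₀ ≠ 0) ∧
  (∃ x₁ : Fin n₁ → ℂ, x₁ ≠ 0 ∧ (Wmat A₁ B₁ C₁ l₀ m₀).mulVec x₁ = 0) ∧
  (∃ x₂ : Fin n₂ → ℂ, x₂ ≠ 0 ∧ (Wmat A₂ B₂ C₂ l₀ m₀).mulVec x₂ = 0)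

/-- `(λ₀,μ₀)` is a finite eigenvalue of the pair of pencils
`(Δ₁ − λΔ₀, Δ₂ − μΔ₀)`. -/
def IsFiniteEigDelta {n₁ n₂ : ℕ}
    (A₁ B₁ C₁ : Matrix (Fin n₁) (Fin n₁) ℂ) (A₂ B₂ C₂ : Matrix (Fin n₂) (Fin n₂) ℂ)
    (l₀ m₀ : ℂ) : Prop :=
  (Delta1 A₁ C₁ A₂ C₂ - l₀ • Delta0 B₁ C₁ B₂ C₂).rank
      < nrank (Delta1 A₁ C₁ A₂ C₂) (Delta0 B₁ C₁ B₂ C₂) ∧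
  (Delta2 A₁ B₁ A₂ B₂ - m₀ • Delta0 B₁ C₁ B₂ C₂).rank
      < nrank (Delta2 A₁ B₁ A₂ B₂) (Delta0 B₁ C₁ B₂ C₂) ∧
  ∃ z : Fin n₁ × Fin n₂ → ℂ, z ≠ 0 ∧
    (Delta1 A₁ C₁ A₂ C₂).mulVec z = l₀ • (Delta0 B₁ C₁ B₂ C₂).mulVec z ∧
    (Delta2 A₁ B₁ A₂ B₂).mulVec z = m₀ • (Delta0 B₁ C₁ B₂ C₂).mulVec z ∧
    z ∉ RedMin (Delta1 A₁ C₁ A₂ C₂) (Delta0 B₁ C₁ B₂ C₂) ∧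
    z ∉ RedMin (Delta2 A₁ B₁ A₂ B₂) (Delta0 B₁ C₁ B₂ C₂)

/-- Genericity conditions (1)–(6) at `(λ₀,μ₀)`. -/
def Generic {n₁ n₂ : ℕ}
    (A₁ B₁ C₁ : Matrix (Fin n₁) (Fin n₁) ℂ) (A₂ B₂ C₂ : Matrix (Fin n₂) (Fin n₂) ℂ)
    (l₀ m₀ : ℂ) : Prop :=
  -- (1) the univariate polynomial `γ ↦ pᵢ(λ₀,γ)` is not identically zero
  (∃ γ : ℂ, ev2 (charPoly A₁ B₁ C₁) l₀ γ ≠ 0) ∧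
  (∃ γ : ℂ, ev2 (charPoly A₂ B₂ C₂) l₀ γ ≠ 0) ∧
  -- (2) the univariate polynomial `β ↦ pᵢ(β,μ₀)` is not identically zero
  (∃ β : ℂ, ev2 (charPoly A₁ B₁ C₁) β m₀ ≠ 0) ∧
  (∃ β : ℂ, ev2 (charPoly A₂ B₂ C₂) β m₀ ≠ 0) ∧
  -- (3)
  (∃ ε > (0:ℝ), ∀ η : ℂ, η ≠ l₀ → ‖η - l₀‖ < ε →
    (Wmat A₁ B₁ C₁ η m₀).rank = n₁ ∧ (Wmat A₂ B₂ C₂ η m₀).rank = n₂) ∧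
  -- (4)
  (∃ ε > (0:ℝ), ∀ θ : ℂ, θ ≠ m₀ → ‖θ - m₀‖ < ε →
    (Wmat A₁ B₁ C₁ l₀ θ).rank = n₁ ∧ (Wmat A₂ B₂ C₂ l₀ θ).rank = n₂) ∧
  -- (5)
  (∀ l₁ m₁ : ℂ, IsFiniteEigW A₁ B₁ C₁ A₂ B₂ C₂ l₁ m₁ → (l₁, m₁) ≠ (l₀, m₀) →
    l₁ ≠ l₀ ∧ m₁ ≠ m₀) ∧
  -- (6)
  (∃ ε > (0:ℝ), ∀ η θ : ℂ, (η, θ) ≠ (l₀, m₀) → ‖η - l₀‖ + ‖θ - m₀‖ < ε →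
    (Wmat A₁ B₁ C₁ l₀ m₀).rank + (Wmat A₂ B₂ C₂ l₀ m₀).rank <
    (Wmat A₁ B₁ C₁ η θ).rank + (Wmat A₂ B₂ C₂ η θ).rank)



lemma kron_key {n₁ n₂ : ℕ} (M₁ D₁ : Matrix (Fin n₁) (Fin n₁) ℂ) (M₂ D₂ : Matrix (Fin n₂) (Fin n₂) ℂ)
    (z : Fin n₁ × Fin n₂ → ℂ) (h : (D₁ ⊗ₖ M₂ - M₁ ⊗ₖ D₂) *ᵥ z = 0) :
    M₂.det • (((M₁.adjugate * D₁) ⊗ₖ (1 : Matrix (Fin n₂) (Fin n₂) ℂ)) *ᵥ z) =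
    M₁.det • (((1 : Matrix (Fin n₁) (Fin n₁) ℂ) ⊗ₖ (M₂.adjugate * D₂)) *ᵥ z) := by
  have h2 : (M₁.adjugate ⊗ₖ M₂.adjugate) * (D₁ ⊗ₖ M₂ - M₁ ⊗ₖ D₂) =
      M₂.det • ((M₁.adjugate * D₁) ⊗ₖ (1 : Matrix (Fin n₂) (Fin n₂) ℂ)) -
      M₁.det • ((1 : Matrix (Fin n₁) (Fin n₁) ℂ) ⊗ₖ (M₂.adjugate * D₂)) := by
    rw [mul_sub, ← Matrix.mul_kronecker_mul, ← Matrix.mul_kronecker_mul, Matrix.adjugate_mul,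
      Matrix.adjugate_mul, Matrix.kronecker_smul, Matrix.smul_kronecker]
  have h3 := congrArg (fun v => (M₁.adjugate ⊗ₖ M₂.adjugate) *ᵥ v) h
  simp only [Matrix.mulVec_zero] at h3
  rw [Matrix.mulVec_mulVec, h2, Matrix.sub_mulVec, Matrix.smul_mulVec, Matrix.smul_mulVec] at h3
  exact sub_eq_zero.mp h3

lemma key_line {n₁ n₂ : ℕ}
    (P₁ : Matrix (Fin n₁) (Fin n₁) (MvPolynomial (Fin 2) ℂ))
    (P₂ : Matrix (Fin n₂) (Fin n₂) (MvPolynomial (Fin 2) ℂ))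
    (D₁ : Matrix (Fin n₁) (Fin n₁) ℂ) (D₂ : Matrix (Fin n₂) (Fin n₂) ℂ)
    (Q : Fin n₁ × Fin n₂ → MvPolynomial (Fin 2) ℂ) (v : Fin 2 → Polynomial ℂ) (s₀ : ℂ)
    (x₁ : Fin n₁ → ℂ) (x₂ : Fin n₂ → ℂ)
    (hrel : ∀ e : Fin 2 → ℂ, (D₁ ⊗ₖ P₂.map (MvPolynomial.eval e) -
      P₁.map (MvPolynomial.eval e) ⊗ₖ D₂) *ᵥ (fun i => MvPolynomial.eval e (Q i)) = 0)
    (hd : P₁.det ≠ 0)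
    (hg : ∀ q, q ∣ P₁.det → q ∣ P₂.det →
      MvPolynomial.eval (fun i => (v i).eval s₀) q ≠ 0)
    (hline : ∃ t, MvPolynomial.eval (fun i => (v i).eval t) P₁.det ≠ 0)
    (hx : ∀ t, (P₁.map (MvPolynomial.eval (fun i => (v i).eval t))) *ᵥ x₁ =
      (t - s₀) • (D₁ *ᵥ x₁))
    (hQ : ∀ t i, MvPolynomial.eval (fun i => (v i).eval t) (Q i) = vkron x₁ x₂ i) :
    vkron x₁ x₂ = 0 := by
  obtain ⟨e₁, e₂, g, hrp, hg1, hg2⟩ :=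
    UniqueFactorizationMonoid.exists_reduced_factors P₁.det hd P₂.det
  let u : Fin n₁ × Fin n₂ → MvPolynomial (Fin 2) ℂ :=
    ((P₁.adjugate * D₁.map MvPolynomial.C) ⊗ₖ (1 : Matrix (Fin n₂) (Fin n₂) _)) *ᵥ Q
  let u' : Fin n₁ × Fin n₂ → MvPolynomial (Fin 2) ℂ :=
    ((1 : Matrix (Fin n₁) (Fin n₁) _) ⊗ₖ (P₂.adjugate * D₂.map MvPolynomial.C)) *ᵥ Q
  have hu : ∀ (e : Fin 2 → ℂ) i, MvPolynomial.eval e (u i) =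
      ((((P₁.map (MvPolynomial.eval e)).adjugate * D₁) ⊗ₖ (1 : Matrix (Fin n₂) (Fin n₂) ℂ)) *ᵥ
        (fun i => MvPolynomial.eval e (Q i))) i := by
    intro e i
    have h1 := (MvPolynomial.eval e).map_mulVec
      ((P₁.adjugate * D₁.map MvPolynomial.C) ⊗ₖ (1 : Matrix (Fin n₂) (Fin n₂) _)) Q i
    refine h1.trans ?_
    have h2 := RingHom.map_adjugate (MvPolynomial.eval e) P₁
    simp only [RingHom.mapMatrix_apply] at h2
    congr 2
    ext a b
    simp only [Matrix.map_apply, Matrix.kroneckerMap_apply, ← h2, Matrix.mul_apply,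
      Matrix.one_apply]
    split_ifs <;> simp
  have hu' : ∀ (e : Fin 2 → ℂ) i, MvPolynomial.eval e (u' i) =
      (((1 : Matrix (Fin n₁) (Fin n₁) ℂ) ⊗ₖ ((P₂.map (MvPolynomial.eval e)).adjugate * D₂)) *ᵥ
        (fun i => MvPolynomial.eval e (Q i))) i := by
    intro e i
    have h1 := (MvPolynomial.eval e).map_mulVec
      ((1 : Matrix (Fin n₁) (Fin n₁) _) ⊗ₖ (P₂.adjugate * D₂.map MvPolynomial.C)) Q i
    refine h1.trans ?_
    have h2 := RingHom.map_adjugate (MvPolynomial.eval e) P₂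
    simp only [RingHom.mapMatrix_apply] at h2
    congr 2
    ext a b
    simp only [Matrix.map_apply, Matrix.kroneckerMap_apply, ← h2, Matrix.mul_apply,
      Matrix.one_apply]
    split_ifs <;> simp
  have hdet : ∀ {n : ℕ} (P : Matrix (Fin n) (Fin n) (MvPolynomial (Fin 2) ℂ)) (e : Fin 2 → ℂ),
      MvPolynomial.eval e P.det = (P.map (MvPolynomial.eval e)).det := by
    intro n P e
    rw [RingHom.map_det, RingHom.mapMatrix_apply]
  have hrel2 : ∀ i, P₂.det * u i = P₁.det * u' i := by
    intro i
    apply MvPolynomial.funext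
    intro e
    have h := congrFun (kron_key _ _ _ _ _ (hrel e)) i
    simp only [Pi.smul_apply, smul_eq_mul] at h
    rw [map_mul, map_mul, hu, hu', hdet, hdet, h]
  have hg0 : g ≠ 0 := by
    rintro rfl
    exact hd (by rw [← hg1, zero_mul])
  have hdvd : ∀ i, e₁ ∣ u i := by
    intro i
    have h := hrel2 i
    rw [← hg1, ← hg2, mul_assoc, mul_assoc] at h
    have h' := mul_left_cancel₀ hg0 h
    exact hrp.dvd_of_dvd_mul_left ⟨u' i, h'⟩
  choose w hw using hdvd
  ext i
  let ev : ℂ → Fin 2 → ℂ := fun t i => (v i).eval t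
  have hpt : ∀ t, MvPolynomial.eval (ev t) P₁.det *
      (MvPolynomial.eval (ev t) g * vkron x₁ x₂ i - (t - s₀) * MvPolynomial.eval (ev t) (w i)) = 0 := by
    intro t
    have h1 : (t - s₀) * MvPolynomial.eval (ev t) (u i) =
        MvPolynomial.eval (ev t) P₁.det * vkron x₁ x₂ i := by
      rw [hu]
      have h2 : (fun i => MvPolynomial.eval (ev t) (Q i)) = vkron x₁ x₂ := funext (hQ t)
      have h3 : (t - s₀) • (((P₁.map (MvPolynomial.eval (ev t))).adjugate * D₁) *ᵥ x₁) =
          MvPolynomial.eval (ev t) P₁.det • x₁ := by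
        rw [← Matrix.mulVec_mulVec, ← Matrix.mulVec_smul, ← hx t, Matrix.mulVec_mulVec,
          Matrix.adjugate_mul, hdet, Matrix.smul_mulVec, Matrix.one_mulVec]
      have h4 : ∀ (M : Matrix (Fin n₁) (Fin n₁) ℂ),
          ((M ⊗ₖ (1 : Matrix (Fin n₂) (Fin n₂) ℂ)) *ᵥ vkron x₁ x₂) i = (M *ᵥ x₁) i.1 * x₂ i.2 := by
        intro M
        simp [Matrix.mulVec, dotProduct, Fintype.sum_prod_type, Matrix.one_apply, vkron,
          Finset.sum_mul, mul_assoc]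
      rw [h2, h4]
      have h5 := congrFun h3 i.1
      simp only [Pi.smul_apply, smul_eq_mul] at h5
      rw [← mul_assoc, h5, vkron, mul_assoc]
    rw [hw i, map_mul] at h1
    have h6 : MvPolynomial.eval (ev t) P₁.det =
      MvPolynomial.eval (ev t) g * MvPolynomial.eval (ev t) e₁ := by rw [← hg1, map_mul]
    linear_combination (-MvPolynomial.eval (ev t) g) * h1 +
      (-(t - s₀) * MvPolynomial.eval (ev t) (w i)) * h6
  have hev : ∀ (p : MvPolynomial (Fin 2) ℂ) t,
      (MvPolynomial.aeval v p).eval t = MvPolynomial.eval (ev t) p := by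
    intro p t
    induction p using MvPolynomial.induction_on with
    | C a => simp
    | add p q hp hq => simp [hp, hq]
    | mul_X p j hp => simp [hp, ev]
  let F : Polynomial ℂ := MvPolynomial.aeval v g * Polynomial.C (vkron x₁ x₂ i) -
    (Polynomial.X - Polynomial.C s₀) * MvPolynomial.aeval v (w i)
  have hF : MvPolynomial.aeval v P₁.det * F = 0 := by
    apply Polynomial.funext
    intro t
    simpa [F, hev] using hpt t
  have hF0 : F = 0 := by
    rcases mul_eq_zero.mp hF with h | h
    · obtain ⟨t, ht⟩ := hline
      refine absurd ?_ ht
      have := hev P₁.det t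
      rw [h] at this
      simpa using this.symm
    · exact h
  have h7 : F.eval s₀ = 0 := by rw [hF0]; simp
  simp only [F, Polynomial.eval_sub, Polynomial.eval_mul, hev, Polynomial.eval_C,
    Polynomial.eval_X, sub_self, zero_mul, sub_zero] at h7
  rcases mul_eq_zero.mp h7 with h | h
  · exact absurd h (hg g ⟨e₁, hg1.symm⟩ ⟨e₂, hg2.symm⟩)
  · exact h

lemma mem_redMin {N : Type*} [Fintype N] (A B : Matrix N N ℂ) (l₀ : ℂ) (z : N → ℂ)
    (hz : z ∈ RedMin A B) :
    ∃ q : N → Polynomial ℂ,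
      (∀ t : ℂ, (A - t • B) *ᵥ (fun i => (q i).eval t) = (A - l₀ • B) *ᵥ z) ∧
      ∀ i, (q i).eval l₀ = z i := by
  have hlin0 : ∃ q : N → Polynomial ℂ,
      (∀ t : ℂ, (A - t • B) *ᵥ (fun i => (q i).eval t) = (A - l₀ • B) *ᵥ (0 : N → ℂ)) ∧
      ∀ i, (q i).eval l₀ = (0 : N → ℂ) i := by
    refine ⟨0, fun t => ?_, by simp⟩
    have : (fun i => ((0 : N → Polynomial ℂ) i).eval t) = 0 := by ext; simp
    rw [this]; simp
  have hadd : ∀ x y : N → ℂ, (∃ q : N → Polynomial ℂ,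
      (∀ t : ℂ, (A - t • B) *ᵥ (fun i => (q i).eval t) = (A - l₀ • B) *ᵥ x) ∧
      ∀ i, (q i).eval l₀ = x i) → (∃ q : N → Polynomial ℂ,
      (∀ t : ℂ, (A - t • B) *ᵥ (fun i => (q i).eval t) = (A - l₀ • B) *ᵥ y) ∧
      ∀ i, (q i).eval l₀ = y i) → ∃ q : N → Polynomial ℂ,
      (∀ t : ℂ, (A - t • B) *ᵥ (fun i => (q i).eval t) = (A - l₀ • B) *ᵥ (x + y)) ∧
      ∀ i, (q i).eval l₀ = (x + y) i := by
    rintro x y ⟨q, hq, hq'⟩ ⟨r, hr, hr'⟩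
    refine ⟨q + r, fun t => ?_, fun i => by simp [hq', hr']⟩
    rw [Matrix.mulVec_add, ← hq t, ← hr t, ← Matrix.mulVec_add]
    congr 1
    ext i; simp
  have hsmul : ∀ (a : ℂ) (x : N → ℂ), (∃ q : N → Polynomial ℂ,
      (∀ t : ℂ, (A - t • B) *ᵥ (fun i => (q i).eval t) = (A - l₀ • B) *ᵥ x) ∧
      ∀ i, (q i).eval l₀ = x i) → ∃ q : N → Polynomial ℂ,
      (∀ t : ℂ, (A - t • B) *ᵥ (fun i => (q i).eval t) = (A - l₀ • B) *ᵥ (a • x)) ∧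
      ∀ i, (q i).eval l₀ = (a • x) i := by
    rintro a x ⟨q, hq, hq'⟩
    refine ⟨fun i => Polynomial.C a * q i, fun t => ?_, fun i => by simp [hq']⟩
    rw [Matrix.mulVec_smul, ← hq t, ← Matrix.mulVec_smul]
    congr 1
    ext i; simp
  unfold RedMin at hz
  induction hz using Submodule.span_induction with
  | zero => exact hlin0
  | add x y _ _ hx hy => exact hadd x y hx hy
  | smul a x _ hx => exact hsmul a x hx
  | mem x hx =>
    obtain ⟨ξ, hξ⟩ := Set.mem_iUnion.mp hx
    have hξ' : x ∈ GKer A B ξ := hξ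
    unfold GKer at hξ'
    clear hx hξ
    induction hξ' using Submodule.span_induction with
    | zero => exact hlin0
    | add x y _ _ hx hy => exact hadd x y hx hy
    | smul a x _ hx => exact hsmul a x hx
    | mem x hx =>
      obtain ⟨p, hp, rfl⟩ := hx
      have hs : ∀ i, ∃ s : Polynomial ℂ, p i - Polynomial.C ((p i).eval ξ) =
          (Polynomial.X - Polynomial.C ξ) * s := fun i => Polynomial.X_sub_C_dvd_sub_C_eval
      choose s hs using hs
      have hse : ∀ i t, (p i).eval t - (p i).eval ξ = (t - ξ) * (s i).eval t := by
        intro i t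
        have := congrArg (Polynomial.eval t) (hs i)
        simpa using this
      let r : N → Polynomial ℂ := (A.map Polynomial.C - (Polynomial.X : Polynomial ℂ) •
        B.map Polynomial.C) *ᵥ s
      have hre : ∀ t i, (r i).eval t = ((A - t • B) *ᵥ (fun i => (s i).eval t)) i := by
        intro t i
        simp [r, Matrix.mulVec, dotProduct, Polynomial.eval_finsetSum, mul_comm t]
      have hAξ : A *ᵥ (fun i => (p i).eval ξ) = ξ • (B *ᵥ (fun i => (p i).eval ξ)) := by
        have := hp ξ
        rw [Matrix.sub_mulVec, Matrix.smul_mulVec] at this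
        exact sub_eq_zero.mp this
      have hr : ∀ i, r i = Polynomial.C ((B *ᵥ (fun i => (p i).eval ξ)) i) := by
        intro i
        have h1 : (Polynomial.X - Polynomial.C ξ) *
            (r i - Polynomial.C ((B *ᵥ (fun i => (p i).eval ξ)) i)) = 0 := by
          apply Polynomial.funext
          intro t
          have h2 : (t - ξ) • ((A - t • B) *ᵥ (fun i => (s i).eval t)) =
              (t - ξ) • (B *ᵥ (fun i => (p i).eval ξ)) := by
            rw [← Matrix.mulVec_smul]
            have h3 : ((t - ξ) • fun i => (s i).eval t) =
                (fun i => (p i).eval t) - (fun i => (p i).eval ξ) := by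
              ext i; simp [hse]
            rw [h3, Matrix.mulVec_sub, hp t, Matrix.sub_mulVec, hAξ, Matrix.smul_mulVec]
            module
          have h4 := congrFun h2 i
          simp only [Pi.smul_apply, smul_eq_mul] at h4
          simp only [Polynomial.eval_mul, Polynomial.eval_sub, Polynomial.eval_X,
            Polynomial.eval_C, Polynomial.eval_zero, hre]
          linear_combination h4
        rcases mul_eq_zero.mp h1 with h | h
        · exact absurd h (Polynomial.X_sub_C_ne_zero ξ)
        · exact sub_eq_zero.mp h
      refine ⟨fun i => Polynomial.C (ξ - l₀) * s i + p i, fun t => ?_, fun i => ?_⟩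
      · have h1 : (fun i => (Polynomial.C (ξ - l₀) * s i + p i).eval t) =
            (ξ - l₀) • (fun i => (s i).eval t) + (fun i => (p i).eval t) := by
          ext i; simp
        have h2 : (A - t • B) *ᵥ (fun i => (s i).eval t) = B *ᵥ (fun i => (p i).eval ξ) := by
          ext i
          rw [← hre, hr]; simp
        rw [h1, Matrix.mulVec_add, hp t, Matrix.mulVec_smul, h2, Matrix.sub_mulVec, hAξ,
          Matrix.smul_mulVec]
        module
      · have := hse i l₀
        simp only [Polynomial.eval_add, Polynomial.eval_mul, Polynomial.eval_C]
        linear_combination this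

lemma exists_compl {N : Type*} [Fintype N] [DecidableEq N] (M : Matrix N N ℂ) :
    ∃ U : Matrix N N ℂ, (M + U).det ≠ 0 ∧ U.rank + M.rank ≤ Fintype.card N := by
  let f := M.mulVecLin
  obtain ⟨S, hS⟩ := Submodule.exists_isCompl (LinearMap.range f)
  obtain ⟨T, hT⟩ := Submodule.exists_isCompl (LinearMap.ker f)
  have hd1 := LinearMap.finrank_range_add_finrank_ker f
  have hd2 := Submodule.finrank_add_eq_of_isCompl hS
  have hfr : Module.finrank ℂ (LinearMap.ker f) = Module.finrank ℂ S := by omega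
  let e := LinearEquiv.ofFinrankEq _ _ hfr
  let φ : (N → ℂ) →ₗ[ℂ] (N → ℂ) :=
    S.subtype ∘ₗ e.toLinearMap ∘ₗ Submodule.projectionOnto _ _ hT
  have hφ : ∀ v, (LinearMap.toMatrix' φ) *ᵥ v = φ v := fun v => by
    rw [← Matrix.toLin'_apply, Matrix.toLin'_toMatrix']
  refine ⟨LinearMap.toMatrix' φ, ?_, ?_⟩
  · intro h0
    obtain ⟨v, hv, hv0⟩ := Matrix.exists_mulVec_eq_zero_iff.mpr h0
    apply hv
    rw [Matrix.add_mulVec, hφ] at hv0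
    have hS2 : φ v ∈ S := Subtype.property _
    have hr2 : φ v ∈ LinearMap.range f := by
      rw [← neg_eq_of_add_eq_zero_right hv0]
      exact Submodule.neg_mem _ ⟨v, rfl⟩
    have hφ0 : φ v = 0 := Submodule.disjoint_def.mp hS.disjoint _ hr2 hS2
    have hker : v ∈ LinearMap.ker f := by
      rw [hφ0, add_zero] at hv0
      exact hv0
    have h1 : Submodule.projectionOnto _ _ hT v = 0 := by
      have : e (Submodule.projectionOnto _ _ hT v) = 0 := Subtype.ext hφ0
      simpa using this
    have h2 := Submodule.projectionOnto_apply_left hT ⟨v, hker⟩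
    have h3 := h2.symm.trans h1
    exact congrArg Subtype.val h3
  · have h1 : (LinearMap.toMatrix' φ).rank ≤ Module.finrank ℂ S := by
      rw [Matrix.rank]
      apply Submodule.finrank_mono
      rintro _ ⟨v, rfl⟩
      rw [Matrix.mulVecLin_apply, hφ]
      exact Subtype.property _
    have h2 : M.rank = Module.finrank ℂ (LinearMap.range f) := rfl
    rw [Module.finrank_fintype_fun_eq_card] at hd2
    omega

lemma rank_lt {N : Type*} [Fintype N] [DecidableEq N] (A B : Matrix N N ℂ) (l₀ : ℂ) (z : N → ℂ)
    (hz : (A - l₀ • B) *ᵥ z = 0)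
    (hno : ¬ ∃ q : N → Polynomial ℂ,
      (∀ t : ℂ, (A - t • B) *ᵥ (fun i => (q i).eval t) = 0) ∧
      ∀ i, (q i).eval l₀ = z i) :
    (A - l₀ • B).rank < nrank A B := by
  by_contra hle
  push Not at hle
  have hmax : ∀ t : ℂ, (A - t • B).rank ≤ (A - l₀ • B).rank := by
    intro t
    refine le_trans ?_ hle
    exact le_ciSup (f := fun ξ : ℂ => (A - ξ • B).rank)
      ⟨Fintype.card N, by rintro _ ⟨ξ, rfl⟩; exact Matrix.rank_le_card_width _⟩ t
  obtain ⟨U, hU, hUr⟩ := exists_compl (A - l₀ • B)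
  apply hno
  let Mp : Matrix N N (Polynomial ℂ) :=
    A.map Polynomial.C - (Polynomial.X : Polynomial ℂ) • B.map Polynomial.C
  let K : Matrix N N (Polynomial ℂ) := Mp + U.map Polynomial.C
  have hM : ∀ t, Mp.map (Polynomial.evalRingHom t) = A - t • B := by
    intro t; ext i j; simp [Mp, mul_comm t]
  have hK : ∀ t, K.map (Polynomial.evalRingHom t) = A - t • B + U := by
    intro t; ext i j; simp [K, Mp, mul_comm t]
  have hKdet : ∀ t, K.det.eval t = (A - t • B + U).det := by
    intro t
    have := RingHom.map_det (Polynomial.evalRingHom t) K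
    rw [RingHom.mapMatrix_apply, hK] at this
    simpa using this
  let p : N → Polynomial ℂ := K.adjugate *ᵥ (fun i => Polynomial.C ((U *ᵥ z) i))
  have hp : ∀ t, (fun i => (p i).eval t) = (A - t • B + U).adjugate *ᵥ (U *ᵥ z) := by
    intro t
    ext i
    have h1 := (Polynomial.evalRingHom t).map_mulVec K.adjugate
      (fun i => Polynomial.C ((U *ᵥ z) i)) i
    have h2 := RingHom.map_adjugate (Polynomial.evalRingHom t) K
    rw [RingHom.mapMatrix_apply, RingHom.mapMatrix_apply, hK] at h2
    rw [h2] at h1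
    refine h1.trans ?_
    have h3 : (Polynomial.evalRingHom t) ∘ (fun i => Polynomial.C ((U *ᵥ z) i)) = U *ᵥ z := by
      ext j; simp
    rw [h3]
  have hMp : ∀ t i, ((Mp *ᵥ p) i).eval t = ((A - t • B) *ᵥ (fun i => (p i).eval t)) i := by
    intro t i
    have h1 := (Polynomial.evalRingHom t).map_mulVec Mp p i
    rw [hM] at h1
    exact h1
  have hzero : ∀ t : ℂ, (A - t • B + U).det ≠ 0 →
      (A - t • B) *ᵥ ((A - t • B + U).adjugate *ᵥ (U *ᵥ z)) = 0 := by
    intro t ht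
    set M := A - t • B with hMdef
    have hinj : ∀ v, (M + U) *ᵥ v = 0 → v = 0 := fun v hv =>
      Matrix.eq_zero_of_mulVec_eq_zero ht hv
    -- surjectivity of U from ker M onto range U
    have hsub : Submodule.map U.mulVecLin (LinearMap.ker M.mulVecLin) =
        LinearMap.range U.mulVecLin := by
      apply Submodule.eq_of_le_of_finrank_le
      · exact LinearMap.map_le_range
      · have h1 : Module.finrank ℂ (Submodule.map U.mulVecLin (LinearMap.ker M.mulVecLin)) =
            Module.finrank ℂ (LinearMap.ker M.mulVecLin) := by
          rw [← LinearMap.range_domRestrict]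
          apply LinearMap.finrank_range_of_inj
          rw [← LinearMap.ker_eq_bot, LinearMap.ker_eq_bot']
          rintro ⟨v, hv⟩ hUv
          have hv' : M *ᵥ v = 0 := hv
          have hUv' : U *ᵥ v = 0 := hUv
          exact Subtype.ext (hinj v (by rw [Matrix.add_mulVec, hv', hUv', add_zero]))
        rw [h1]
        have h2 := LinearMap.finrank_range_add_finrank_ker M.mulVecLin
        have h3 : M.rank ≤ _ := hmax t
        have h4 : M.rank = Module.finrank ℂ (LinearMap.range M.mulVecLin) := rfl
        have h5 : U.rank = Module.finrank ℂ (LinearMap.range U.mulVecLin) := rfl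
        rw [Module.finrank_fintype_fun_eq_card] at h2
        omega
    have hmem : U *ᵥ z ∈ Submodule.map U.mulVecLin (LinearMap.ker M.mulVecLin) := by
      rw [hsub]; exact ⟨z, rfl⟩
    obtain ⟨v, hv, hvU⟩ := hmem
    have hv' : M *ᵥ v = 0 := hv
    have hvU' : U *ᵥ v = U *ᵥ z := hvU
    have h6 : (M + U) *ᵥ v = U *ᵥ z := by rw [Matrix.add_mulVec, hv', hvU', zero_add]
    rw [← h6, Matrix.mulVec_mulVec _ _ (M + U), Matrix.adjugate_mul, Matrix.smul_mulVec, Matrix.one_mulVec,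
      Matrix.mulVec_smul, hv', smul_zero]
  have hKne : K.det ≠ 0 := by
    intro h
    apply hU
    rw [← hKdet, h]; simp
  have hall : ∀ i, (Mp *ᵥ p) i = 0 := by
    intro i
    have : K.det * (Mp *ᵥ p) i = 0 := by
      apply Polynomial.funext
      intro t
      rw [Polynomial.eval_mul, hMp, hp, hKdet, Polynomial.eval_zero]
      by_cases ht : (A - t • B + U).det = 0
      · rw [ht, zero_mul]
      · rw [hzero t ht]; simp
    exact (mul_eq_zero.mp this).resolve_left hKne
  refine ⟨fun i => Polynomial.C ((A - l₀ • B + U).det)⁻¹ * p i, fun t => ?_, fun i => ?_⟩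
  · have h1 : (fun i => (Polynomial.C ((A - l₀ • B + U).det)⁻¹ * p i).eval t) =
        ((A - l₀ • B + U).det)⁻¹ • (fun i => (p i).eval t) := by ext i; simp
    have h2 : (A - t • B) *ᵥ (fun i => (p i).eval t) = 0 := by
      ext i; rw [← hMp, hall]; simp
    rw [h1, Matrix.mulVec_smul, h2, smul_zero]
  · have h1 : U *ᵥ z = (A - l₀ • B + U) *ᵥ z := by rw [Matrix.add_mulVec, hz, zero_add]
    have h2 := congrFun (hp l₀) i
    rw [h1, Matrix.mulVec_mulVec, Matrix.adjugate_mul, Matrix.smul_mulVec, Matrix.one_mulVec] at h2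
    simp only [Pi.smul_apply, smul_eq_mul] at h2
    rw [Polynomial.eval_mul, Polynomial.eval_C, h2, inv_mul_cancel_left₀ hU]

def polyMat {n : ℕ} (A B C : Matrix (Fin n) (Fin n) ℂ) :
    Matrix (Fin n) (Fin n) (MvPolynomial (Fin 2) ℂ) :=
  Matrix.of fun i j =>
    MvPolynomial.C (A i j) + MvPolynomial.X 0 * MvPolynomial.C (B i j)
      + MvPolynomial.X 1 * MvPolynomial.C (C i j)

lemma polyMat_map {n : ℕ} (A B C : Matrix (Fin n) (Fin n) ℂ) (e : Fin 2 → ℂ) :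
    (polyMat A B C).map (MvPolynomial.eval e) = Wmat A B C (e 0) (e 1) := by
  ext i j; simp [polyMat, Wmat]

lemma pencil1 {n₁ n₂ : ℕ}
    (A₁ B₁ C₁ : Matrix (Fin n₁) (Fin n₁) ℂ) (A₂ B₂ C₂ : Matrix (Fin n₂) (Fin n₂) ℂ) (l m : ℂ) :
    C₁ ⊗ₖ Wmat A₂ B₂ C₂ l m - Wmat A₁ B₁ C₁ l m ⊗ₖ C₂ =
      Delta1 A₁ C₁ A₂ C₂ - l • Delta0 B₁ C₁ B₂ C₂ := by
  ext i j
  simp [Wmat, Delta1, Delta0]; ring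

lemma pencil2 {n₁ n₂ : ℕ}
    (A₁ B₁ C₁ : Matrix (Fin n₁) (Fin n₁) ℂ) (A₂ B₂ C₂ : Matrix (Fin n₂) (Fin n₂) ℂ) (l m : ℂ) :
    B₁ ⊗ₖ Wmat A₂ B₂ C₂ l m - Wmat A₁ B₁ C₁ l m ⊗ₖ B₂ =
      -(Delta2 A₁ B₁ A₂ B₂ - m • Delta0 B₁ C₁ B₂ C₂) := by
  ext i j
  simp [Wmat, Delta2, Delta0]; ring

lemma kron_vkron {n₁ n₂ : ℕ} (M : Matrix (Fin n₁) (Fin n₁) ℂ) (M' : Matrix (Fin n₂) (Fin n₂) ℂ)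
    (x : Fin n₁ → ℂ) (y : Fin n₂ → ℂ) :
    (M ⊗ₖ M') *ᵥ vkron x y = vkron (M *ᵥ x) (M' *ᵥ y) := by
  ext i
  simp only [Matrix.mulVec, dotProduct, Fintype.sum_prod_type, vkron, Matrix.kroneckerMap_apply,
    Finset.sum_mul_sum]
  refine Finset.sum_congr rfl fun a _ => Finset.sum_congr rfl fun b _ => ?_
  ring

/-- **Theorem (W ⇒ Δ).** If the pencils `W₁, W₂` are regular, `(λ₀,μ₀)` is a finite
eigenvalue of the two-parameter problem, and the genericity conditions (1)–(6) hold at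
`(λ₀,μ₀)`, then `(λ₀,μ₀)` is a finite eigenvalue of the associated pair of pencils
`(Δ₁ − λΔ₀, Δ₂ − μΔ₀)`. -/
theorem eigW_to_eigDelta {n₁ n₂ : ℕ}
    (A₁ B₁ C₁ : Matrix (Fin n₁) (Fin n₁) ℂ) (A₂ B₂ C₂ : Matrix (Fin n₂) (Fin n₂) ℂ)
    (l₀ m₀ : ℂ)
    (hreg₁ : charPoly A₁ B₁ C₁ ≠ 0) (hreg₂ : charPoly A₂ B₂ C₂ ≠ 0)
    (heig : IsFiniteEigW A₁ B₁ C₁ A₂ B₂ C₂ l₀ m₀)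
    (hgen : Generic A₁ B₁ C₁ A₂ B₂ C₂ l₀ m₀) :
    IsFiniteEigDelta A₁ B₁ C₁ A₂ B₂ C₂ l₀ m₀ := by
  obtain ⟨hcd, ⟨x₁, hx₁, hWx₁⟩, ⟨x₂, hx₂, hWx₂⟩⟩ := heig
  obtain ⟨h1, -, h2, -, -⟩ := hgen
  have hz0 : vkron x₁ x₂ ≠ 0 := by
    obtain ⟨i, hi⟩ := Function.ne_iff.mp hx₁
    obtain ⟨j, hj⟩ := Function.ne_iff.mp hx₂
    intro h
    exact mul_ne_zero hi hj (congrFun h (i, j))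
  have hk1 : (Delta1 A₁ C₁ A₂ C₂ - l₀ • Delta0 B₁ C₁ B₂ C₂) *ᵥ vkron x₁ x₂ = 0 := by
    rw [← pencil1 _ _ _ _ _ _ l₀ m₀, Matrix.sub_mulVec, kron_vkron, kron_vkron, hWx₁, hWx₂]
    ext i; simp [vkron]
  have hk2 : (Delta2 A₁ B₁ A₂ B₂ - m₀ • Delta0 B₁ C₁ B₂ C₂) *ᵥ vkron x₁ x₂ = 0 := by
    rw [← neg_eq_zero, ← Matrix.neg_mulVec, ← pencil2 _ _ _ _ _ _ l₀ m₀, Matrix.sub_mulVec,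
      kron_vkron, kron_vkron, hWx₁, hWx₂]
    ext i; simp [vkron]
  have hgcd : ∀ q, q ∣ (polyMat A₁ B₁ C₁).det → q ∣ (polyMat A₂ B₂ C₂).det →
      ev2 q l₀ m₀ ≠ 0 := by
    intro q hq1 hq2
    by_cases hc : ∃ c : ℂ, q = MvPolynomial.C c
    · obtain ⟨c, rfl⟩ := hc
      intro h0
      have hc0 : c = 0 := by simpa [ev2] using h0
      rw [hc0, map_zero, zero_dvd_iff] at hq1
      exact hreg₁ hq1
    · exact hcd q hq1 hq2 hc
  have hno1 : ¬ ∃ q : Fin n₁ × Fin n₂ → Polynomial ℂ,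
      (∀ t : ℂ, (Delta1 A₁ C₁ A₂ C₂ - t • Delta0 B₁ C₁ B₂ C₂) *ᵥ (fun i => (q i).eval t) = 0) ∧
      ∀ i, (q i).eval l₀ = vkron x₁ x₂ i := by
    rintro ⟨q, hq, hq0⟩
    have hv : ∀ t, (fun i => ((![Polynomial.C l₀, Polynomial.X] : Fin 2 → Polynomial ℂ) i).eval t)
        = ![l₀, t] := by
      intro t; ext i; fin_cases i <;> simp
    have hQe : ∀ (e : Fin 2 → ℂ) i, MvPolynomial.eval e
        (Polynomial.aeval (MvPolynomial.X 0 : MvPolynomial (Fin 2) ℂ) (q i)) = (q i).eval (e 0) := by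
      intro e i
      induction q i using Polynomial.induction_on' with
      | add p r hp hr => simp [hp, hr]
      | monomial n a => simp [Polynomial.aeval_monomial]
    refine hz0 (key_line (polyMat A₁ B₁ C₁) (polyMat A₂ B₂ C₂) C₁ C₂
      (fun i => Polynomial.aeval (MvPolynomial.X 0) (q i)) ![Polynomial.C l₀, Polynomial.X] m₀
      x₁ x₂ ?_ hreg₁ ?_ ?_ ?_ ?_)
    · intro e
      simp only [hQe, polyMat_map, pencil1]
      exact hq _
    · intro r hr1 hr2
      rw [hv]; exact hgcd r hr1 hr2
    · obtain ⟨γ, hγ⟩ := h1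
      exact ⟨γ, by rw [hv]; exact hγ⟩
    · intro t
      rw [hv, polyMat_map]
      have : Wmat A₁ B₁ C₁ l₀ t = Wmat A₁ B₁ C₁ l₀ m₀ + (t - m₀) • C₁ := by
        unfold Wmat; module
      simp only [Matrix.cons_val_zero, Matrix.cons_val_one]
      rw [this, Matrix.add_mulVec, hWx₁, zero_add, Matrix.smul_mulVec]
    · intro t i
      rw [hv, hQe]
      exact hq0 i
  have hno2 : ¬ ∃ q : Fin n₁ × Fin n₂ → Polynomial ℂ,
      (∀ t : ℂ, (Delta2 A₁ B₁ A₂ B₂ - t • Delta0 B₁ C₁ B₂ C₂) *ᵥ (fun i => (q i).eval t) = 0) ∧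
      ∀ i, (q i).eval m₀ = vkron x₁ x₂ i := by
    rintro ⟨q, hq, hq0⟩
    have hv : ∀ t, (fun i => ((![Polynomial.X, Polynomial.C m₀] : Fin 2 → Polynomial ℂ) i).eval t)
        = ![t, m₀] := by
      intro t; ext i; fin_cases i <;> simp
    have hQe : ∀ (e : Fin 2 → ℂ) i, MvPolynomial.eval e
        (Polynomial.aeval (MvPolynomial.X 1 : MvPolynomial (Fin 2) ℂ) (q i)) = (q i).eval (e 1) := by
      intro e i
      induction q i using Polynomial.induction_on' with
      | add p r hp hr => simp [hp, hr]
      | monomial n a => simp [Polynomial.aeval_monomial]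
    refine hz0 (key_line (polyMat A₁ B₁ C₁) (polyMat A₂ B₂ C₂) B₁ B₂
      (fun i => Polynomial.aeval (MvPolynomial.X 1) (q i)) ![Polynomial.X, Polynomial.C m₀] l₀
      x₁ x₂ ?_ hreg₁ ?_ ?_ ?_ ?_)
    · intro e
      simp only [hQe, polyMat_map, pencil2]
      rw [Matrix.neg_mulVec, hq, neg_zero]
    · intro r hr1 hr2
      rw [hv]; exact hgcd r hr1 hr2
    · obtain ⟨γ, hγ⟩ := h2
      exact ⟨γ, by rw [hv]; exact hγ⟩
    · intro t
      rw [hv, polyMat_map]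
      have : Wmat A₁ B₁ C₁ t m₀ = Wmat A₁ B₁ C₁ l₀ m₀ + (t - l₀) • B₁ := by
        unfold Wmat; module
      simp only [Matrix.cons_val_zero, Matrix.cons_val_one]
      rw [this, Matrix.add_mulVec, hWx₁, zero_add, Matrix.smul_mulVec]
    · intro t i
      rw [hv, hQe]
      exact hq0 i
  refine ⟨rank_lt _ _ _ _ hk1 hno1, rank_lt _ _ _ _ hk2 hno2, vkron x₁ x₂, hz0, ?_, ?_, ?_, ?_⟩
  · rw [Matrix.sub_mulVec, Matrix.smul_mulVec] at hk1
    exact sub_eq_zero.mp hk1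
  · rw [Matrix.sub_mulVec, Matrix.smul_mulVec] at hk2
    exact sub_eq_zero.mp hk2
  · intro hz
    obtain ⟨q, hq, hq0⟩ := mem_redMin _ _ l₀ _ hz
    exact hno1 ⟨q, fun t => (hq t).trans hk1, hq0⟩
  · intro hz
    obtain ⟨q, hq, hq0⟩ := mem_redMin _ _ m₀ _ hz
    exact hno2 ⟨q, fun t => (hq t).trans hk2, hq0⟩
end
end

section
/- Let W₁, W₂ be regular bivariate matrix pencils whose characteristic polynomials p₁ and p₂ are coprime (no nonconstant common divisor in ℂ[λ,μ]), let (λ₀,μ₀) ∈ ℂ², and assume the genericity conditions (1)–(6) hold at (λ₀,μ₀). Then (λ₀,μ₀) is a finite eigenvalue of the two-parameter problem if and only if (λ₀,μ₀) is a finite eigenvalue of the associated pair of pencils (Δ₁ − λΔ₀, Δ₂ − μΔ₀). -/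
open Matrix Kronecker

noncomputable section

/-- Evaluation of a polynomial vector. -/
def evv {N : Type*} (p : N → Polynomial ℂ) (t : ℂ) : N → ℂ := fun i => (p i).eval t

/-- An complementing perturbation. -/
lemma exists_compl_map {V : Type*} [AddCommGroup V] [Module ℂ V] [FiniteDimensional ℂ V]
    (f : V →ₗ[ℂ] V) : ∃ g : V →ₗ[ℂ] V, Function.Injective (f + g) ∧
      Module.finrank ℂ (LinearMap.range g) ≤ Module.finrank ℂ (LinearMap.ker f) := by
  obtain ⟨K, hK⟩ := Submodule.exists_isCompl (LinearMap.ker f)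
  obtain ⟨I, hI⟩ := Submodule.exists_isCompl (LinearMap.range f)
  have h1 := LinearMap.finrank_range_add_finrank_ker f
  have h2 := Submodule.finrank_add_eq_of_isCompl hI
  have h3 : Module.finrank ℂ (LinearMap.ker f) = Module.finrank ℂ I := by omega
  let e := LinearEquiv.ofFinrankEq _ _ h3
  let pr := Submodule.projectionOnto _ _ hK
  let h : LinearMap.ker f →ₗ[ℂ] V := I.subtype ∘ₗ e.toLinearMap
  refine ⟨h ∘ₗ pr, ?_, ?_⟩
  · rw [← LinearMap.ker_eq_bot, LinearMap.ker_eq_bot']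
    intro v hv
    have hv' : f v + (e (pr v) : V) = 0 := by simpa [h] using hv
    have hm : (e (pr v) : V) ∈ LinearMap.range f := by
      rw [eq_neg_of_add_eq_zero_right hv']
      exact Submodule.neg_mem _ ⟨v, rfl⟩
    have hz : (e (pr v) : V) = 0 :=
      Submodule.disjoint_def.1 hI.disjoint _ hm (e (pr v)).2
    have hfv : f v = 0 := by simpa [hz] using hv'
    have : pr v = 0 := by
      have : e (pr v) = 0 := Subtype.ext hz
      simpa using this
    have h4 : pr v = ⟨v, hfv⟩ := Submodule.projectionOnto_apply_left hK ⟨v, hfv⟩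
    rw [h4] at this
    simpa using congrArg Subtype.val this
  · calc _ ≤ Module.finrank ℂ (LinearMap.range h) :=
          Submodule.finrank_mono (LinearMap.range_comp_le_range _ _)
      _ ≤ _ := LinearMap.finrank_range_le h

/-- If the rank does not drop at `l₀`, every kernel vector extends to a polynomial one. -/
lemma exists_poly_kernel {N : Type*} [Fintype N] [DecidableEq N] (A B : Matrix N N ℂ) (l₀ : ℂ)
    (z : N → ℂ) (hz : A.mulVec z = l₀ • B.mulVec z)
    (hr : nrank A B ≤ (A - l₀ • B).rank) :
    ∃ p : N → Polynomial ℂ, (∀ t, (A - t • B).mulVec (evv p t) = 0) ∧ evv p l₀ = z := by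
  obtain ⟨g, hinj, hrk⟩ := exists_compl_map (Matrix.mulVecLin (A - l₀ • B))
  set X : Matrix N N ℂ := LinearMap.toMatrix' g with hX
  have hgX : g = Matrix.mulVecLin X := by
    simp [hX, ← Matrix.toLin'_apply']
  have hrank : ∀ t, (A - t • B).rank ≤ (A - l₀ • B).rank := fun t =>
    le_trans (le_ciSup (f := fun ξ : ℂ => (A - ξ • B).rank)
      ⟨Fintype.card N, by rintro _ ⟨ξ, rfl⟩; exact Matrix.rank_le_card_width _⟩ t) hr
  let Mp : Matrix N N (Polynomial ℂ) := Matrix.of fun i j =>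
    Polynomial.C (A i j + X i j) - Polynomial.X * Polynomial.C (B i j)
  have hMp : ∀ t, (Polynomial.evalRingHom t).mapMatrix Mp = (A - t • B) + X := by
    intro t; ext i j; simp [Mp]; ring
  let p : N → Polynomial ℂ := Mp.adjugate.mulVec (fun i => Polynomial.C (X.mulVec z i))
  have hp : ∀ t, evv p t = ((A - t • B) + X).adjugate.mulVec (X.mulVec z) := by
    intro t
    rw [← hMp t, ← RingHom.map_adjugate]
    ext i
    simp [evv, p, Matrix.mulVec, dotProduct, Polynomial.eval_finsetSum]
  have hz0 : (A - l₀ • B).mulVec z = 0 := by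
    rw [Matrix.sub_mulVec, Matrix.smul_mulVec, hz, sub_self]
  have hdet0 : ((A - l₀ • B) + X).det ≠ 0 := by
    intro h0
    obtain ⟨v, hv, hv0⟩ := Matrix.exists_mulVec_eq_zero_iff.2 h0
    apply hv
    apply hinj
    rw [hgX, map_zero, LinearMap.add_apply, Matrix.mulVecLin_apply, Matrix.mulVecLin_apply,
      ← Matrix.add_mulVec]
    exact hv0
  have hl0 : evv p l₀ = ((A - l₀ • B) + X).det • z := by
    rw [hp]
    have : X.mulVec z = ((A - l₀ • B) + X).mulVec z := by
      rw [Matrix.add_mulVec, hz0, zero_add]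
    rw [this, Matrix.mulVec_mulVec, Matrix.adjugate_mul, Matrix.smul_mulVec, Matrix.one_mulVec]
  have hker : ∀ t, ((A - t • B) + X).det ≠ 0 → (A - t • B).mulVec (evv p t) = 0 := by
    intro t ht
    -- `X` maps `ker (A - tB)` onto `range X`
    set M := A - t • B with hM
    have hinjt : ∀ v, (M + X).mulVec v = 0 → v = 0 := by
      intro v hv
      by_contra hne
      exact ht (Matrix.exists_mulVec_eq_zero_iff.1 ⟨v, hne, hv⟩)
    let G : LinearMap.ker M.mulVecLin →ₗ[ℂ] (N → ℂ) := X.mulVecLin ∘ₗ Submodule.subtype _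
    have hGinj : Function.Injective G := by
      rw [← LinearMap.ker_eq_bot, LinearMap.ker_eq_bot']
      intro v hv
      apply Subtype.ext
      apply hinjt
      have h1 : M.mulVec v.1 = 0 := LinearMap.mem_ker.1 v.2
      have h2 : X.mulVec v.1 = 0 := by simpa [G] using hv
      simp [Matrix.add_mulVec, h1, h2]
    have hle : LinearMap.range G ≤ LinearMap.range X.mulVecLin :=
      LinearMap.range_comp_le_range _ _
    have hfr : Module.finrank ℂ (LinearMap.range X.mulVecLin)
        ≤ Module.finrank ℂ (LinearMap.range G) := by
      rw [LinearMap.finrank_range_of_inj hGinj, ← hgX]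
      have e1 := LinearMap.finrank_range_add_finrank_ker M.mulVecLin
      have e2 := LinearMap.finrank_range_add_finrank_ker (A - l₀ • B).mulVecLin
      have e3 : Module.finrank ℂ (LinearMap.range M.mulVecLin) ≤
        Module.finrank ℂ (LinearMap.range (A - l₀ • B).mulVecLin) := hrank t
      omega
    have heq := Submodule.eq_of_le_of_finrank_le hle hfr
    have hmem : X.mulVec z ∈ LinearMap.range G := by
      rw [heq]; exact ⟨z, rfl⟩
    obtain ⟨k, hk⟩ := hmem
    have h1 : M.mulVec k.1 = 0 := LinearMap.mem_ker.1 k.2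
    have h2 : X.mulVec z = (M + X).mulVec k.1 := by
      rw [Matrix.add_mulVec, h1, zero_add, ← hk]; rfl
    have h3 : evv p t = (M + X).adjugate.mulVec (X.mulVec z) := hp t
    rw [h3, h2, Matrix.mulVec_mulVec (M := (M + X).adjugate), Matrix.adjugate_mul, Matrix.smul_mulVec,
      Matrix.one_mulVec, Matrix.mulVec_smul, h1, smul_zero]
  have hall : ∀ t, (A - t • B).mulVec (evv p t) = 0 := by
    have hd : Mp.det ≠ 0 := by
      intro h
      apply hdet0
      rw [← hMp, ← RingHom.map_det, h, map_zero]
    have key : ∀ i, Mp.det * (∑ j, (Polynomial.C (A i j) - Polynomial.X * Polynomial.C (B i j))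
        * p j) = 0 := by
      intro i
      apply Polynomial.funext
      intro t
      rw [Polynomial.eval_mul, Polynomial.eval_zero]
      by_cases ht : ((A - t • B) + X).det = 0
      · rw [← hMp, ← RingHom.map_det] at ht
        simp at ht
        simp [ht]
      · have := congrFun (hker t ht) i
        simp [Matrix.mulVec, dotProduct, evv, mul_comm t] at this
        simp [Polynomial.eval_finsetSum, this]
    intro t
    ext i
    have := congrArg (Polynomial.eval t) ((mul_eq_zero.1 (key i)).resolve_left hd)
    simpa [Polynomial.eval_finsetSum, Matrix.mulVec, dotProduct, evv, mul_comm t] using this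
  refine ⟨fun i => Polynomial.C (((A - l₀ • B) + X).det)⁻¹ * p i, ?_, ?_⟩
  · intro t
    have : evv (fun i => Polynomial.C (((A - l₀ • B) + X).det)⁻¹ * p i) t
        = (((A - l₀ • B) + X).det)⁻¹ • evv p t := by
      ext i; simp [evv]
    rw [this, Matrix.mulVec_smul, hall, smul_zero]
  · have : evv (fun i => Polynomial.C (((A - l₀ • B) + X).det)⁻¹ * p i) l₀
        = (((A - l₀ • B) + X).det)⁻¹ • evv p l₀ := by
      ext i; simp [evv]
    rw [this, hl0, smul_smul, inv_mul_cancel₀ hdet0, one_smul]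

/-- Vectors of `RedMin` admit a polynomial divided difference. -/
lemma redMin_aux {N : Type*} [Fintype N] (A B : Matrix N N ℂ) (v : N → ℂ)
    (hv : v ∈ RedMin A B) :
    ∃ w : N → Polynomial ℂ, ∀ t, (A - t • B).mulVec (evv w t) = B.mulVec v := by
  have hadd : ∀ x y : N → ℂ,
      (∃ w : N → Polynomial ℂ, ∀ t, (A - t • B).mulVec (evv w t) = B.mulVec x) →
      (∃ w : N → Polynomial ℂ, ∀ t, (A - t • B).mulVec (evv w t) = B.mulVec y) →
      (∃ w : N → Polynomial ℂ, ∀ t, (A - t • B).mulVec (evv w t) = B.mulVec (x + y)) := by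
    rintro x y ⟨w, hw⟩ ⟨w', hw'⟩
    refine ⟨w + w', fun t => ?_⟩
    have : evv (w + w') t = evv w t + evv w' t := by ext i; simp [evv]
    rw [this, Matrix.mulVec_add, Matrix.mulVec_add, hw, hw']
  have hsm : ∀ (c : ℂ) (x : N → ℂ),
      (∃ w : N → Polynomial ℂ, ∀ t, (A - t • B).mulVec (evv w t) = B.mulVec x) →
      (∃ w : N → Polynomial ℂ, ∀ t, (A - t • B).mulVec (evv w t) = B.mulVec (c • x)) := by
    rintro c x ⟨w, hw⟩
    refine ⟨c • w, fun t => ?_⟩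
    have : evv (c • w) t = c • evv w t := by ext i; simp [evv]
    rw [this, Matrix.mulVec_smul, Matrix.mulVec_smul, hw]
  have h0 : ∃ w : N → Polynomial ℂ, ∀ t, (A - t • B).mulVec (evv w t) = B.mulVec 0 := by
    refine ⟨0, fun t => ?_⟩
    have : evv (0 : N → Polynomial ℂ) t = 0 := by ext i; simp [evv]
    rw [this, Matrix.mulVec_zero, Matrix.mulVec_zero]
  refine Submodule.span_induction (p := fun v _ =>
    ∃ w : N → Polynomial ℂ, ∀ t, (A - t • B).mulVec (evv w t) = B.mulVec v)
    ?_ h0 (fun x y _ _ => hadd x y) (fun c x _ => hsm c x) hv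
  intro x hx
  obtain ⟨ξ, hξ⟩ := Set.mem_iUnion.1 hx
  refine Submodule.span_induction (p := fun v _ =>
    ∃ w : N → Polynomial ℂ, ∀ t, (A - t • B).mulVec (evv w t) = B.mulVec v)
    ?_ h0 (fun x y _ _ => hadd x y) (fun c x _ => hsm c x) hξ
  rintro _ ⟨p, hp, rfl⟩
  have hdiv : ∀ i, ∃ w : Polynomial ℂ,
      p i - Polynomial.C ((p i).eval ξ) = (Polynomial.X - Polynomial.C ξ) * w := by
    intro i
    exact Polynomial.dvd_iff_isRoot.2 (by simp)
  choose w hw using hdiv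
  refine ⟨w, ?_⟩
  have key : ∀ t i, (t - ξ) * (A - t • B).mulVec (evv w t) i
      = (t - ξ) * B.mulVec (fun i => (p i).eval ξ) i := by
    intro t i
    have e1 : (t - ξ) • evv w t = evv p t - evv p ξ := by
      ext j
      have := congrArg (Polynomial.eval t) (hw j)
      simp at this
      simp [evv, this]
    have e2 : (A - t • B).mulVec (evv p ξ) = (ξ - t) • B.mulVec (evv p ξ) := by
      have h1 : (A - ξ • B).mulVec (evv p ξ) = 0 := hp ξ
      rw [Matrix.sub_mulVec, Matrix.smul_mulVec] at h1 ⊢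
      rw [sub_eq_zero.1 h1, sub_smul]
    have e3 : (A - t • B).mulVec ((t - ξ) • evv w t) = (t - ξ) • B.mulVec (evv p ξ) := by
      rw [e1, Matrix.mulVec_sub, e2, show (A - t • B).mulVec (evv p t) = 0 from hp t, zero_sub,
        ← neg_smul, neg_sub]
    rw [Matrix.mulVec_smul] at e3
    exact congrFun e3 i
  intro t
  ext i
  have hpoly : (Polynomial.X - Polynomial.C ξ) *
      (∑ j, (Polynomial.C (A i j) - Polynomial.X * Polynomial.C (B i j)) * w j) =
      (Polynomial.X - Polynomial.C ξ) *
      Polynomial.C (B.mulVec (fun i => (p i).eval ξ) i) := by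
    apply Polynomial.funext
    intro s
    have := key s i
    simpa [Polynomial.eval_finsetSum, Matrix.mulVec, dotProduct, evv, mul_comm s] using this
  have := congrArg (Polynomial.eval t) (mul_left_cancel₀ (Polynomial.X_sub_C_ne_zero ξ) hpoly)
  simpa [Polynomial.eval_finsetSum, Matrix.mulVec, dotProduct, evv, mul_comm t] using this

lemma notRed {N : Type*} [Fintype N] [DecidableEq N] (A B : Matrix N N ℂ) (l₀ : ℂ)
    (z : N → ℂ) (hz : A.mulVec z = l₀ • B.mulVec z)
    (h : ¬ ∃ p : N → Polynomial ℂ, (∀ t, (A - t • B).mulVec (evv p t) = 0) ∧ evv p l₀ = z) :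
    z ∉ RedMin A B ∧ (A - l₀ • B).rank < nrank A B := by
  refine ⟨fun hmem => h ?_, ?_⟩
  · obtain ⟨w, hw⟩ := redMin_aux A B z hmem
    refine ⟨fun i => Polynomial.C (z i) + (Polynomial.X - Polynomial.C l₀) * w i, ?_, ?_⟩
    · intro t
      have : evv (fun i => Polynomial.C (z i) + (Polynomial.X - Polynomial.C l₀) * w i) t
          = z + (t - l₀) • evv w t := by
        ext i; simp [evv]
      rw [this, Matrix.mulVec_add, Matrix.mulVec_smul, hw, Matrix.sub_mulVec, Matrix.smul_mulVec,
        hz, sub_smul]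
      abel
    · ext i; simp [evv]
  · by_contra hlt
    exact h (exists_poly_kernel A B l₀ z hz (not_lt.1 hlt))

lemma kron_mulVec {m n : Type*} [Fintype m] [Fintype n] (A : Matrix m m ℂ) (B : Matrix n n ℂ)
    (z : m × n → ℂ) (i : m) (j : n) :
    (A ⊗ₖ B).mulVec z (i, j) = (A * (Matrix.of fun i j => z (i, j)) * Bᵀ) i j := by
  simp only [Matrix.mulVec, dotProduct, Matrix.mul_apply, Matrix.kroneckerMap_apply,
    Fintype.sum_prod_type, Matrix.of_apply, Matrix.transpose_apply, Finset.sum_mul]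
  rw [Finset.sum_comm]
  refine Finset.sum_congr rfl fun _ _ => Finset.sum_congr rfl fun _ _ => ?_
  ring

/-- Nilpotency step of the backward direction. -/
lemma nil_aux {m n : Type*} [Fintype m] [Fintype n] [DecidableEq m] [DecidableEq n]
    (A₁ B₁ : Matrix m m ℂ) (A₂ B₂ D : Matrix n n ℂ) (hD : D * A₂ᵀ = B₂ᵀ)
    (h5 : ∀ s : ℂ, s ≠ 0 → (A₁ + s • B₁).det ≠ 0 ∨ (A₂ + s • B₂).det ≠ 0)
    (d : ℕ) : ∀ (f : Polynomial ℂ) (Y : Matrix m n ℂ), f ≠ 0 → f.natDegree ≤ d →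
      B₁ * Y = A₁ * Y * D → Y * Polynomial.aeval D f = 0 → ∃ k, Y * D ^ k = 0 := by
  induction d with
  | zero =>
    intro f Y hf hd hY h0
    have hc := Polynomial.eq_C_of_natDegree_le_zero hd
    have hc0 : f.coeff 0 ≠ 0 := by
      intro h; rw [h] at hc; simp at hc; exact hf hc
    rw [hc, Polynomial.aeval_C, Algebra.algebraMap_eq_smul_one, Matrix.mul_smul,
      Matrix.mul_one] at h0
    exact ⟨0, by simpa using (smul_eq_zero.1 h0).resolve_left hc0⟩
  | succ d ih =>
    intro f Y hf hd hY h0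
    by_cases hdeg : f.natDegree = 0
    · exact ih f Y hf (by omega) hY h0
    obtain ⟨β, hβ⟩ := IsAlgClosed.exists_root f (by
      intro h; exact hdeg (Polynomial.natDegree_eq_of_degree_eq_some h))
    obtain ⟨g, rfl⟩ := Polynomial.dvd_iff_isRoot.2 hβ
    have hg : g ≠ 0 := right_ne_zero_of_mul hf
    have hgd : g.natDegree ≤ d := by
      rw [Polynomial.natDegree_mul (Polynomial.X_sub_C_ne_zero β) hg,
        Polynomial.natDegree_X_sub_C] at hd
      omega
    set G := Polynomial.aeval D g with hG
    have hcomm : D * G = G * D := by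
      have h1 : Polynomial.aeval D (Polynomial.X * g) = Polynomial.aeval D (g * Polynomial.X) := by
        rw [mul_comm]
      simpa using h1
    rw [map_mul, map_sub, Polynomial.aeval_X, Polynomial.aeval_C,
      Algebra.algebraMap_eq_smul_one, ← hG] at h0
    have h0' : Y * D * G = β • (Y * G) := by
      rw [Matrix.sub_mul, Matrix.mul_sub, sub_eq_zero, ← Matrix.mul_assoc] at h0
      rw [h0]; simp
    by_cases hb : β = 0
    · obtain ⟨k, hk⟩ := ih g (Y * D) hg hgd (by
        rw [← Matrix.mul_assoc, hY]; simp only [Matrix.mul_assoc]) (by rw [← hG, h0', hb, zero_smul])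
      exact ⟨k + 1, by rw [pow_succ', ← Matrix.mul_assoc, hk]⟩
    · refine ih g Y hg hgd hY ?_
      rw [← hG]
      have e1 : B₁ * (Y * G) = β • (A₁ * (Y * G)) := by
        rw [← Matrix.mul_assoc, hY, ← Matrix.mul_smul, ← h0']
        simp only [Matrix.mul_assoc]
      have e2 : (Y * G) * B₂ᵀ = β • ((Y * G) * A₂ᵀ) := by
        rw [← hD, ← Matrix.smul_mul, ← h0', Matrix.mul_assoc Y D G, hcomm]
        simp only [Matrix.mul_assoc]
      have hs : (-β⁻¹ : ℂ) ≠ 0 := neg_ne_zero.2 (inv_ne_zero hb)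
      rcases h5 _ hs with h | h
      · have : (A₁ + (-β⁻¹) • B₁) * (Y * G) = 0 := by
          rw [Matrix.add_mul, Matrix.smul_mul, e1, smul_smul, neg_mul, inv_mul_cancel₀ hb]
          simp
        have h' := congrArg (fun M => (A₁ + (-β⁻¹) • B₁)⁻¹ * M) this
        simpa only [Matrix.nonsing_inv_mul_cancel_left _ _ (isUnit_iff_ne_zero.2 h), Matrix.mul_zero] using h'
      · have : (Y * G) * (A₂ + (-β⁻¹) • B₂)ᵀ = 0 := by
          rw [Matrix.transpose_add, Matrix.transpose_smul, Matrix.mul_add, Matrix.mul_smul, e2,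
            smul_smul, neg_mul, inv_mul_cancel₀ hb]
          simp
        have hu : IsUnit ((A₂ + (-β⁻¹) • B₂)ᵀ).det := by
          rw [Matrix.det_transpose]; exact isUnit_iff_ne_zero.2 h
        have h' := congrArg (fun M => M * ((A₂ + (-β⁻¹) • B₂)ᵀ)⁻¹) this
        simpa only [Matrix.mul_nonsing_inv_cancel_right _ _ hu, Matrix.zero_mul] using h'

lemma back_mat {m n : Type*} [Fintype m] [Fintype n] [DecidableEq m] [DecidableEq n]
    (A₁ B₁ C₁ : Matrix m m ℂ) (A₂ B₂ C₂ : Matrix n n ℂ) (Z : Matrix m n ℂ)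
    (hdet : A₂.det ≠ 0)
    (h5 : ∀ s : ℂ, s ≠ 0 → (A₁ + s • B₁).det ≠ 0 ∨ (A₂ + s • B₂).det ≠ 0)
    (hC : C₁ * Z * A₂ᵀ = A₁ * Z * C₂ᵀ) (hB : B₁ * Z * A₂ᵀ = A₁ * Z * B₂ᵀ) :
    ∃ P : Matrix m n (Polynomial ℂ), P.map (Polynomial.eval 0) = Z ∧
      ∀ t : ℂ, C₁ * P.map (Polynomial.eval t) * (A₂ + t • B₂)ᵀ =
        (A₁ + t • B₁) * P.map (Polynomial.eval t) * C₂ᵀ := by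
  have hu : IsUnit (A₂ᵀ).det := by
    rw [Matrix.det_transpose]; exact isUnit_iff_ne_zero.2 hdet
  set D := B₂ᵀ * (A₂ᵀ)⁻¹ with hDdef
  have hD : D * A₂ᵀ = B₂ᵀ := by rw [hDdef, Matrix.nonsing_inv_mul_cancel_right _ _ hu]
  have hBD : B₁ * Z = A₁ * Z * D := by
    rw [hDdef, ← Matrix.mul_assoc, ← hB, Matrix.mul_nonsing_inv_cancel_right _ _ hu]
  obtain ⟨K, hK⟩ := nil_aux A₁ B₁ A₂ B₂ D hD h5 _ D.charpoly Z (Matrix.charpoly_monic D).ne_zero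
    le_rfl hBD (by rw [Matrix.aeval_self_charpoly, Matrix.mul_zero])
  let P : Matrix m n (Polynomial ℂ) := Matrix.of fun i j =>
    ∑ k ∈ Finset.range K, Polynomial.C ((Z * (-D) ^ k) i j) * Polynomial.X ^ k
  have hP : ∀ t, P.map (Polynomial.eval t) = Z * ∑ k ∈ Finset.range K, ((-t) • D) ^ k := by
    intro t
    ext i j
    rw [Matrix.mul_sum, Matrix.sum_apply]
    simp only [P, Matrix.map_apply, Matrix.of_apply, Polynomial.eval_finsetSum,
      Polynomial.eval_mul, Polynomial.eval_C, Polynomial.eval_pow, Polynomial.eval_X]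
    refine Finset.sum_congr rfl fun k _ => ?_
    rw [show (-t) • D = t • (-D) by simp, smul_pow, Matrix.mul_smul, Matrix.smul_apply,
      smul_eq_mul, mul_comm]
  have hnil : ∀ t : ℂ, Z * ((-t) • D) ^ K = 0 := by
    intro t; rw [smul_pow, Matrix.mul_smul, hK, smul_zero]
  have hR : ∀ t : ℂ, P.map (Polynomial.eval t) * (1 + t • D) = Z := by
    intro t
    have := geom_sum_mul ((-t) • D) K
    have e : (1 + t • D) = -((-t) • D - 1) := by simp [neg_smul]
    rw [hP, Matrix.mul_assoc, e, Matrix.mul_neg, this, Matrix.mul_neg, Matrix.mul_sub, hnil]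
    simp
  have hL : ∀ t : ℂ, Z * (1 + t • D) * ∑ k ∈ Finset.range K, ((-t) • D) ^ k = Z := by
    intro t
    have := mul_geom_sum ((-t) • D) K
    have e : (1 + t • D) = -((-t) • D - 1) := by simp [neg_smul]
    rw [Matrix.mul_assoc, e, Matrix.neg_mul, this, Matrix.mul_neg, Matrix.mul_sub, hnil]
    simp
  refine ⟨P, ?_, ?_⟩
  · simpa using hR 0
  · intro t
    have e1 : (A₂ + t • B₂)ᵀ = (1 + t • D) * A₂ᵀ := by
      rw [Matrix.add_mul, Matrix.one_mul, Matrix.smul_mul, hD, Matrix.transpose_add,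
        Matrix.transpose_smul]
    have e2 : (A₁ + t • B₁) * P.map (Polynomial.eval t) = A₁ * Z := by
      rw [hP, ← Matrix.mul_assoc, Matrix.add_mul, Matrix.smul_mul, hBD]
      rw [show A₁ * Z + t • (A₁ * Z * D) = A₁ * (Z * (1 + t • D)) by
        simp [Matrix.mul_add, Matrix.mul_assoc]]
      rw [Matrix.mul_assoc, hL]
    rw [e2, e1, ← hC, ← Matrix.mul_assoc, Matrix.mul_assoc C₁, hR]

lemma ev2_charPoly {n : ℕ} (A B C : Matrix (Fin n) (Fin n) ℂ) (l m : ℂ) :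
    ev2 (charPoly A B C) l m = (Wmat A B C l m).det := by
  unfold ev2 charPoly
  rw [RingHom.map_det]
  congr 1
  ext i j
  simp [Wmat]

lemma Wmat_swap {n : ℕ} (A B C : Matrix (Fin n) (Fin n) ℂ) (l m : ℂ) :
    Wmat A C B m l = Wmat A B C l m := by
  unfold Wmat; abel

lemma charPoly_swap {n : ℕ} (A B C : Matrix (Fin n) (Fin n) ℂ) :
    charPoly A C B = MvPolynomial.renameEquiv ℂ (Equiv.swap (0 : Fin 2) 1) (charPoly A B C) := by
  unfold charPoly
  rw [AlgEquiv.map_det]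
  congr 1
  ext1 i j
  simp
  ring

lemma relPrime_of {p q : MvPolynomial (Fin 2) ℂ} (hp : p ≠ 0)
    (h : ∀ r : MvPolynomial (Fin 2) ℂ, r ∣ p → r ∣ q → ∃ c : ℂ, r = MvPolynomial.C c) :
    IsRelPrime p q := by
  intro r h1 h2
  obtain ⟨c, rfl⟩ := h r h1 h2
  have hc : c ≠ 0 := by
    rintro rfl
    rw [MvPolynomial.C_0, zero_dvd_iff] at h1
    exact hp h1
  exact (isUnit_iff_ne_zero.2 hc).map MvPolynomial.C

lemma relPrime_map {R : Type*} [CommRing R] (e : R ≃+* R) {p q : R} (h : IsRelPrime p q) :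
    IsRelPrime (e p) (e q) := by
  intro r h1 h2
  have h1' : e.symm r ∣ p := by simpa using map_dvd e.symm h1
  have h2' : e.symm r ∣ q := by simpa using map_dvd e.symm h2
  have := (h h1' h2').map e
  simpa using this

/-- matrix over the bivariate ring -/
def WR {n : ℕ} (A B C : Matrix (Fin n) (Fin n) ℂ) :
    Matrix (Fin n) (Fin n) (MvPolynomial (Fin 2) ℂ) :=
  Matrix.of fun i j =>
    MvPolynomial.C (A i j) + MvPolynomial.X 0 * MvPolynomial.C (B i j)
      + MvPolynomial.X 1 * MvPolynomial.C (C i j)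

lemma WR_map {n : ℕ} (A B C : Matrix (Fin n) (Fin n) ℂ) (x : Fin 2 → ℂ) :
    (WR A B C).map (MvPolynomial.eval x) = Wmat A B C (x 0) (x 1) := by
  ext i j; simp [WR, Wmat]

/-- The forward direction, matrix form. -/
lemma fwd_mat {n₁ n₂ : ℕ}
    (A₁ B₁ C₁ : Matrix (Fin n₁) (Fin n₁) ℂ) (A₂ B₂ C₂ : Matrix (Fin n₂) (Fin n₂) ℂ)
    (l₀ m₀ : ℂ) (hreg₁ : charPoly A₁ B₁ C₁ ≠ 0)
    (hco : IsRelPrime (charPoly A₁ B₁ C₁) (charPoly A₂ B₂ C₂))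
    (γ : ℂ) (hγ : (Wmat A₁ B₁ C₁ l₀ γ).det ≠ 0)
    (x₁ : Fin n₁ → ℂ) (x₂ : Fin n₂ → ℂ) (hx₁ : x₁ ≠ 0) (hx₂ : x₂ ≠ 0)
    (h₁ : (Wmat A₁ B₁ C₁ l₀ m₀).mulVec x₁ = 0)
    (P : Matrix (Fin n₁) (Fin n₂) (Polynomial ℂ))
    (hP : ∀ t, C₁ * P.map (Polynomial.eval t) * (A₂ + t • B₂)ᵀ =
      (A₁ + t • B₁) * P.map (Polynomial.eval t) * C₂ᵀ)
    (hP0 : P.map (Polynomial.eval l₀) = Matrix.vecMulVec x₁ x₂) : False := by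
  set PR : Matrix (Fin n₁) (Fin n₂) (MvPolynomial (Fin 2) ℂ) :=
    P.map (Polynomial.aeval (MvPolynomial.X 0)) with hPR
  have hPRm : ∀ x : Fin 2 → ℂ, PR.map (MvPolynomial.eval x) = P.map (Polynomial.eval (x 0)) := by
    intro x
    ext i j
    simp only [hPR, Matrix.map_apply]
    have : ∀ f : Polynomial ℂ, MvPolynomial.eval x (Polynomial.aeval (MvPolynomial.X 0) f)
        = Polynomial.eval (x 0) f := by
      intro f
      have := Polynomial.aeval_algHom_apply (MvPolynomial.aeval x)
        (MvPolynomial.X 0 : MvPolynomial (Fin 2) ℂ) f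
      rw [MvPolynomial.aeval_X] at this
      rw [← Polynomial.coe_aeval_eq_eval, this, MvPolynomial.aeval_eq_eval]
    exact this _
  let C1R := C₁.map (MvPolynomial.C (σ := Fin 2))
  let C2R := C₂.map (MvPolynomial.C (σ := Fin 2))
  have hC1m : ∀ x : Fin 2 → ℂ, C1R.map (MvPolynomial.eval x) = C₁ := by
    intro x; ext i j; simp [C1R]
  have hC2m : ∀ x : Fin 2 → ℂ, C2R.map (MvPolynomial.eval x) = C₂ := by
    intro x; ext i j; simp [C2R]
  set W1 := WR A₁ B₁ C₁ with hW1
  set W2 := WR A₂ B₂ C₂ with hW2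
  have hd1 : W1.det = charPoly A₁ B₁ C₁ := rfl
  have hd2 : W2.det = charPoly A₂ B₂ C₂ := rfl
  have hid : C1R * PR * W2ᵀ = W1 * PR * C2Rᵀ := by
    have : ∀ x : Fin 2 → ℂ, (C1R * PR * W2ᵀ).map (MvPolynomial.eval x)
        = (W1 * PR * C2Rᵀ).map (MvPolynomial.eval x) := by
      intro x
      simp only [Matrix.map_mul, Matrix.transpose_map, hPRm, hC1m, hC2m, hW1, hW2, WR_map]
      have := hP (x 0)
      simp only [Wmat, Matrix.transpose_add _ (x 1 • C₂), Matrix.mul_add, Matrix.add_mul,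
        Matrix.transpose_smul, Matrix.mul_smul, Matrix.smul_mul] at this ⊢
      simp only [Matrix.transpose_add, Matrix.mul_add, Matrix.transpose_smul, Matrix.mul_smul]
        at this ⊢
      rw [this]
    ext1 i j
    apply MvPolynomial.funext
    intro x
    exact congrFun (congrFun (this x) i) j
  have hid2 : W2.det • (W1.adjugate * (C1R * PR)) = W1.det • (PR * C2Rᵀ * W2ᵀ.adjugate) := by
    have h := congrArg (fun M => W1.adjugate * M * W2ᵀ.adjugate) hid
    have e1 : W1.adjugate * (C1R * PR * W2ᵀ) * W2ᵀ.adjugate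
        = W2.det • (W1.adjugate * (C1R * PR)) := by
      rw [Matrix.mul_assoc, Matrix.mul_assoc (C1R * PR), Matrix.mul_adjugate,
        Matrix.det_transpose]
      simp
    have e2 : W1.adjugate * (W1 * PR * C2Rᵀ) * W2ᵀ.adjugate
        = W1.det • (PR * C2Rᵀ * W2ᵀ.adjugate) := by
      rw [Matrix.mul_assoc W1, ← Matrix.mul_assoc W1.adjugate, Matrix.adjugate_mul]
      simp
    rw [← e1, ← e2, h]
  have hdvd : ∀ i j, W1.det ∣ (W1.adjugate * (C1R * PR)) i j := by
    intro i j
    have h := congrFun (congrFun hid2 i) j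
    simp only [Matrix.smul_apply, smul_eq_mul] at h
    rw [← hd1, ← hd2] at hco
    exact hco.dvd_of_dvd_mul_left ⟨_, h⟩
  choose Q hQ using hdvd
  let QM : Matrix (Fin n₁) (Fin n₂) (MvPolynomial (Fin 2) ℂ) := Matrix.of Q
  have hQM : C1R * PR = W1 * QM := by
    have h : W1.adjugate * (C1R * PR) = W1.det • QM := by
      ext1 i j; simp [QM, hQ]
    have h' := congrArg (fun M => W1 * M) h
    rw [← Matrix.mul_assoc, Matrix.mul_adjugate, Matrix.smul_mul, Matrix.one_mul,
      Matrix.mul_smul] at h'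
    ext1 i j
    have := congrFun (congrFun h' i) j
    simp only [Matrix.smul_apply, smul_eq_mul] at this
    exact mul_left_cancel₀ (by rw [hd1]; exact hreg₁) this
  have hQe : ∀ m, C₁ * Matrix.vecMulVec x₁ x₂ =
      Wmat A₁ B₁ C₁ l₀ m * QM.map (MvPolynomial.eval ![l₀, m]) := by
    intro m
    have := congrArg (fun M : Matrix (Fin n₁) (Fin n₂) (MvPolynomial (Fin 2) ℂ) =>
      M.map (MvPolynomial.eval ![l₀, m])) hQM
    simp only [Matrix.map_mul, hPRm, hC1m, hW1, WR_map] at this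
    rw [← hP0]
    simpa using this
  have hS : ∀ m, Wmat A₁ B₁ C₁ l₀ m *
      ((m - m₀) • QM.map (MvPolynomial.eval ![l₀, m]) - Matrix.vecMulVec x₁ x₂) = 0 := by
    intro m
    have hw : Wmat A₁ B₁ C₁ l₀ m = Wmat A₁ B₁ C₁ l₀ m₀ + (m - m₀) • C₁ := by
      unfold Wmat; rw [sub_smul]; abel
    have h0 : Wmat A₁ B₁ C₁ l₀ m₀ * Matrix.vecMulVec x₁ x₂ = 0 := by
      rw [Matrix.mul_vecMulVec, h₁, Matrix.zero_vecMulVec]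
    rw [Matrix.mul_sub, Matrix.mul_smul, ← hQe, hw, Matrix.add_mul, h0, Matrix.smul_mul]
    simp
  -- polynomial argument
  have hψ : ∀ (f : MvPolynomial (Fin 2) ℂ) (t : ℂ),
      Polynomial.eval t (MvPolynomial.aeval ![Polynomial.C l₀, Polynomial.X] f)
        = MvPolynomial.eval ![l₀, t] f := by
    intro f t
    induction f using MvPolynomial.induction_on with
    | C a => simp
    | add p q hp hq => simp [hp, hq]
    | mul_X p i hp =>
      rw [map_mul, Polynomial.eval_mul, hp, map_mul]
      fin_cases i <;> simp
  have hfin : ∀ i j, x₁ i * x₂ j = 0 := by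
    intro i j
    have hz : (MvPolynomial.aeval ![Polynomial.C l₀, Polynomial.X] (charPoly A₁ B₁ C₁)) *
        ((Polynomial.X - Polynomial.C m₀) *
          MvPolynomial.aeval ![Polynomial.C l₀, Polynomial.X] (Q i j)
          - Polynomial.C (x₁ i * x₂ j)) = 0 := by
      apply Polynomial.funext
      intro t
      have hd : MvPolynomial.eval ![l₀, t] (charPoly A₁ B₁ C₁) = (Wmat A₁ B₁ C₁ l₀ t).det :=
        ev2_charPoly _ _ _ _ _
      simp only [Polynomial.eval_mul, Polynomial.eval_sub, hψ, Polynomial.eval_X,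
        Polynomial.eval_C, Polynomial.eval_zero, hd]
      have h := congrArg (fun M => (Wmat A₁ B₁ C₁ l₀ t).adjugate * M) (hS t)
      simp only [Matrix.mul_zero] at h
      rw [← Matrix.mul_assoc, Matrix.adjugate_mul, Matrix.smul_mul, Matrix.one_mul] at h
      have := congrFun (congrFun h i) j
      simpa only [Matrix.smul_apply, Matrix.sub_apply, Matrix.map_apply, Matrix.vecMulVec_apply,
        QM, Matrix.of_apply, smul_eq_mul, Matrix.zero_apply] using this
    rcases mul_eq_zero.1 hz with h | h
    · exfalso
      apply hγ
      have := congrArg (Polynomial.eval γ) h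
      rw [hψ, Polynomial.eval_zero] at this
      rw [← ev2_charPoly]; exact this
    · have := congrArg (Polynomial.eval m₀) h
      simpa using this
  obtain ⟨i, hi⟩ := Function.ne_iff.1 hx₁
  obtain ⟨j, hj⟩ := Function.ne_iff.1 hx₂
  exact (mul_ne_zero hi hj) (hfin i j)

lemma delta1_mulVec {n₁ n₂ : ℕ}
    (A₁ B₁ C₁ : Matrix (Fin n₁) (Fin n₁) ℂ) (A₂ B₂ C₂ : Matrix (Fin n₂) (Fin n₂) ℂ)
    (t : ℂ) (z : Fin n₁ × Fin n₂ → ℂ) (Z : Matrix (Fin n₁) (Fin n₂) ℂ)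
    (hZ : ∀ i j, z (i, j) = Z i j) :
    (Delta1 A₁ C₁ A₂ C₂ - t • Delta0 B₁ C₁ B₂ C₂).mulVec z = 0 ↔
      C₁ * Z * (A₂ + t • B₂)ᵀ = (A₁ + t • B₁) * Z * C₂ᵀ := by
  have hz : (Matrix.of fun i j => z (i, j)) = Z := by ext i j; simp [hZ]
  have key : ∀ i j, (Delta1 A₁ C₁ A₂ C₂ - t • Delta0 B₁ C₁ B₂ C₂).mulVec z (i, j) =
      (C₁ * Z * (A₂ + t • B₂)ᵀ - (A₁ + t • B₁) * Z * C₂ᵀ) i j := by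
    intro i j
    unfold Delta1 Delta0
    simp only [Matrix.sub_mulVec, Matrix.smul_mulVec, Pi.sub_apply, Pi.smul_apply, kron_mulVec, hz,
      Matrix.transpose_add, Matrix.transpose_smul, Matrix.mul_add, Matrix.add_mul,
      Matrix.smul_mul, Matrix.mul_smul, Matrix.sub_apply, Matrix.add_apply, Matrix.smul_apply,
      smul_eq_mul]
    ring
  rw [← sub_eq_zero (a := C₁ * Z * (A₂ + t • B₂)ᵀ)]
  constructor
  · intro h
    ext i j
    rw [← key, h]; rfl
  · intro h
    ext ⟨i, j⟩
    rw [key, h]; rfl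

lemma delta2_eq {n₁ n₂ : ℕ}
    (A₁ B₁ C₁ : Matrix (Fin n₁) (Fin n₁) ℂ) (A₂ B₂ C₂ : Matrix (Fin n₂) (Fin n₂) ℂ) (t : ℂ) :
    Delta2 A₁ B₁ A₂ B₂ - t • Delta0 B₁ C₁ B₂ C₂ =
      - (Delta1 A₁ B₁ A₂ B₂ - t • Delta0 C₁ B₁ C₂ B₂) := by
  unfold Delta2 Delta1 Delta0
  simp only [smul_sub]
  abel

/-- Forward direction, for the pencil `Δ₁ - λ Δ₀`. -/
lemma fwd_delta1 {n₁ n₂ : ℕ}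
    (A₁ B₁ C₁ : Matrix (Fin n₁) (Fin n₁) ℂ) (A₂ B₂ C₂ : Matrix (Fin n₂) (Fin n₂) ℂ)
    (l₀ m₀ : ℂ) (hreg₁ : charPoly A₁ B₁ C₁ ≠ 0)
    (hco : IsRelPrime (charPoly A₁ B₁ C₁) (charPoly A₂ B₂ C₂))
    (γ : ℂ) (hγ : (Wmat A₁ B₁ C₁ l₀ γ).det ≠ 0)
    (x₁ : Fin n₁ → ℂ) (x₂ : Fin n₂ → ℂ) (hx₁ : x₁ ≠ 0) (hx₂ : x₂ ≠ 0)
    (h₁ : (Wmat A₁ B₁ C₁ l₀ m₀).mulVec x₁ = 0) :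
    ¬ ∃ p : Fin n₁ × Fin n₂ → Polynomial ℂ,
      (∀ t, (Delta1 A₁ C₁ A₂ C₂ - t • Delta0 B₁ C₁ B₂ C₂).mulVec (evv p t) = 0) ∧
      evv p l₀ = vkron x₁ x₂ := by
  rintro ⟨p, hp, hp0⟩
  refine fwd_mat A₁ B₁ C₁ A₂ B₂ C₂ l₀ m₀ hreg₁ hco γ hγ x₁ x₂ hx₁ hx₂ h₁
    (Matrix.of fun i j => p (i, j)) ?_ ?_
  · intro t
    exact (delta1_mulVec A₁ B₁ C₁ A₂ B₂ C₂ t (evv p t) _ (fun i j => rfl)).1 (hp t)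
  · ext i j
    exact congrFun hp0 (i, j)

lemma delta1_vkron {n₁ n₂ : ℕ}
    (A₁ B₁ C₁ : Matrix (Fin n₁) (Fin n₁) ℂ) (A₂ B₂ C₂ : Matrix (Fin n₂) (Fin n₂) ℂ)
    (l₀ m₀ : ℂ) (x₁ : Fin n₁ → ℂ) (x₂ : Fin n₂ → ℂ)
    (h₁ : (Wmat A₁ B₁ C₁ l₀ m₀).mulVec x₁ = 0) (h₂ : (Wmat A₂ B₂ C₂ l₀ m₀).mulVec x₂ = 0) :
    (Delta1 A₁ C₁ A₂ C₂ - l₀ • Delta0 B₁ C₁ B₂ C₂).mulVec (vkron x₁ x₂) = 0 := by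
  rw [delta1_mulVec A₁ B₁ C₁ A₂ B₂ C₂ l₀ _ (Matrix.vecMulVec x₁ x₂) (fun i j => rfl)]
  have e1 : (A₁ + l₀ • B₁).mulVec x₁ = -(m₀ • C₁.mulVec x₁) := by
    rw [Wmat, Matrix.add_mulVec, Matrix.smul_mulVec] at h₁
    exact eq_neg_of_add_eq_zero_left h₁
  have e2 : (A₂ + l₀ • B₂).mulVec x₂ = -(m₀ • C₂.mulVec x₂) := by
    rw [Wmat, Matrix.add_mulVec, Matrix.smul_mulVec] at h₂
    exact eq_neg_of_add_eq_zero_left h₂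
  rw [Matrix.mul_vecMulVec, Matrix.mul_vecMulVec, Matrix.vecMulVec_mul, Matrix.vecMulVec_mul,
    Matrix.vecMul_transpose, Matrix.vecMul_transpose, e1, e2]
  ext i j
  simp [Matrix.vecMulVec_apply]
  ring

/-- Backward direction: if `W₂(λ₀,μ₀)` or `W₁(λ₀,μ₀)` is nonsingular then `z ∈ R(Δ₁,Δ₀)`. -/
lemma back_delta {n₁ n₂ : ℕ}
    (A₁ B₁ C₁ : Matrix (Fin n₁) (Fin n₁) ℂ) (A₂ B₂ C₂ : Matrix (Fin n₂) (Fin n₂) ℂ)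
    (l₀ m₀ : ℂ) (z : Fin n₁ × Fin n₂ → ℂ)
    (h5 : ∀ s : ℂ, s ≠ 0 → (Wmat A₁ B₁ C₁ (l₀ + s) m₀).det ≠ 0 ∨
      (Wmat A₂ B₂ C₂ (l₀ + s) m₀).det ≠ 0)
    (hdet : (Wmat A₁ B₁ C₁ l₀ m₀).det ≠ 0 ∨ (Wmat A₂ B₂ C₂ l₀ m₀).det ≠ 0)
    (hz1 : (Delta1 A₁ C₁ A₂ C₂ - l₀ • Delta0 B₁ C₁ B₂ C₂).mulVec z = 0)
    (hz2 : (Delta1 A₁ B₁ A₂ B₂ - m₀ • Delta0 C₁ B₁ C₂ B₂).mulVec z = 0) :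
    z ∈ RedMin (Delta1 A₁ C₁ A₂ C₂) (Delta0 B₁ C₁ B₂ C₂) := by
  set Z : Matrix (Fin n₁) (Fin n₂) ℂ := Matrix.of fun i j => z (i, j) with hZ
  rw [delta1_mulVec A₁ B₁ C₁ A₂ B₂ C₂ l₀ z Z (fun i j => rfl)] at hz1
  rw [delta1_mulVec A₁ C₁ B₁ A₂ C₂ B₂ m₀ z Z (fun i j => rfl)] at hz2
  have hw1 : ∀ s, Wmat A₁ B₁ C₁ (l₀ + s) m₀ = Wmat A₁ B₁ C₁ l₀ m₀ + s • B₁ := by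
    intro s; unfold Wmat; rw [add_smul]; abel
  have hw2 : ∀ s, Wmat A₂ B₂ C₂ (l₀ + s) m₀ = Wmat A₂ B₂ C₂ l₀ m₀ + s • B₂ := by
    intro s; unfold Wmat; rw [add_smul]; abel
  simp only [hw1, hw2] at h5
  have hC : C₁ * Z * (Wmat A₂ B₂ C₂ l₀ m₀)ᵀ = Wmat A₁ B₁ C₁ l₀ m₀ * Z * C₂ᵀ := by
    unfold Wmat
    rw [Matrix.transpose_add, Matrix.mul_add, hz1, Matrix.add_mul _ (m₀ • C₁),
      Matrix.add_mul _ (m₀ • C₁ * Z)]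
    simp
  have hB : B₁ * Z * (Wmat A₂ B₂ C₂ l₀ m₀)ᵀ = Wmat A₁ B₁ C₁ l₀ m₀ * Z * B₂ᵀ := by
    rw [← Wmat_swap A₁, ← Wmat_swap A₂]
    unfold Wmat
    rw [Matrix.transpose_add, Matrix.mul_add, hz2, Matrix.add_mul _ (l₀ • B₁),
      Matrix.add_mul _ (l₀ • B₁ * Z)]
    simp
  have hex : ∃ P : Matrix (Fin n₁) (Fin n₂) (Polynomial ℂ), P.map (Polynomial.eval 0) = Z ∧
      ∀ t : ℂ, C₁ * P.map (Polynomial.eval t) * (Wmat A₂ B₂ C₂ l₀ m₀ + t • B₂)ᵀ =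
        (Wmat A₁ B₁ C₁ l₀ m₀ + t • B₁) * P.map (Polynomial.eval t) * C₂ᵀ := by
    rcases hdet with hdet | hdet
    · obtain ⟨P, hP0, hP⟩ := back_mat _ B₂ C₂ _ B₁ C₁ Zᵀ hdet (fun s hs => (h5 s hs).symm)
        (by have := congrArg Matrix.transpose hC
            simp only [Matrix.transpose_mul, Matrix.transpose_transpose] at this
            simp only [Matrix.mul_assoc]; exact this.symm)
        (by have := congrArg Matrix.transpose hB
            simp only [Matrix.transpose_mul, Matrix.transpose_transpose] at this
            simp only [Matrix.mul_assoc]; exact this.symm)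
      refine ⟨Pᵀ, ?_, ?_⟩
      · rw [Matrix.transpose_map, hP0, Matrix.transpose_transpose]
      · intro t
        have := congrArg Matrix.transpose (hP t)
        simp only [Matrix.transpose_mul, Matrix.transpose_transpose] at this
        rw [Matrix.transpose_map]
        simp only [Matrix.mul_assoc]; exact this.symm
    · exact back_mat _ B₁ C₁ _ B₂ C₂ Z hdet h5 hC hB
  obtain ⟨P, hP0, hP⟩ := hex
  apply Submodule.subset_span
  refine Set.mem_iUnion.2 ⟨l₀, ?_⟩
  apply Submodule.subset_span
  refine ⟨fun q => (P q.1 q.2).comp (Polynomial.X - Polynomial.C l₀), ?_, ?_⟩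
  · intro t
    rw [delta1_mulVec A₁ B₁ C₁ A₂ B₂ C₂ t _ (P.map (Polynomial.eval (t - l₀)))
      (fun i j => by simp)]
    have := hP (t - l₀)
    rw [← hw1, ← hw2] at this
    rw [add_sub_cancel] at this
    simp only [Wmat] at this
    rw [Matrix.transpose_add _ (m₀ • C₂), Matrix.mul_add, Matrix.add_mul _ (m₀ • C₁),
      Matrix.add_mul _ (m₀ • C₁ * _)] at this
    simpa using this
  · ext ⟨i, j⟩
    have := congrFun (congrFun hP0 i) j
    simp [hZ] at this
    simp [this]

/-- **Theorem (equivalence, coprime case).** If the pencils `W₁, W₂` are regular, the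
characteristic polynomials `p₁, p₂` are coprime (no nonconstant common divisor), and
the genericity conditions (1)–(6) hold at `(λ₀,μ₀)`, then `(λ₀,μ₀)` is a finite
eigenvalue of the two-parameter problem if and only if it is a finite eigenvalue of the
associated pair of pencils `(Δ₁ − λΔ₀, Δ₂ − μΔ₀)`. -/
theorem eigW_iff_eigDelta {n₁ n₂ : ℕ}
    (A₁ B₁ C₁ : Matrix (Fin n₁) (Fin n₁) ℂ) (A₂ B₂ C₂ : Matrix (Fin n₂) (Fin n₂) ℂ)
    (l₀ m₀ : ℂ)
    (hreg₁ : charPoly A₁ B₁ C₁ ≠ 0) (hreg₂ : charPoly A₂ B₂ C₂ ≠ 0)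
    (hcoprime : ∀ q : MvPolynomial (Fin 2) ℂ,
      q ∣ charPoly A₁ B₁ C₁ → q ∣ charPoly A₂ B₂ C₂ → ∃ c : ℂ, q = MvPolynomial.C c)
    (hgen : Generic A₁ B₁ C₁ A₂ B₂ C₂ l₀ m₀) :
    IsFiniteEigW A₁ B₁ C₁ A₂ B₂ C₂ l₀ m₀ ↔
      IsFiniteEigDelta A₁ B₁ C₁ A₂ B₂ C₂ l₀ m₀ := by
  have hco := relPrime_of hreg₁ hcoprime
  obtain ⟨⟨γ, hγ⟩, -, ⟨β, hβ⟩, -, -, -, h5, -⟩ := hgen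
  rw [ev2_charPoly] at hγ hβ
  constructor
  · rintro ⟨-, ⟨x₁, hx₁, h₁⟩, ⟨x₂, hx₂, h₂⟩⟩
    have hk1 := delta1_vkron A₁ B₁ C₁ A₂ B₂ C₂ l₀ m₀ x₁ x₂ h₁ h₂
    have h₁' := h₁
    have h₂' := h₂
    rw [← Wmat_swap] at h₁' h₂'
    have hk2 := delta1_vkron A₁ C₁ B₁ A₂ C₂ B₂ m₀ l₀ x₁ x₂ h₁' h₂'
    have hn1 := fwd_delta1 A₁ B₁ C₁ A₂ B₂ C₂ l₀ m₀ hreg₁ hco γ hγ x₁ x₂ hx₁ hx₂ h₁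
    have hn2 := fwd_delta1 A₁ C₁ B₁ A₂ C₂ B₂ m₀ l₀
      (by rw [charPoly_swap]; exact (EmbeddingLike.map_ne_zero_iff).2 hreg₁)
      (by
        rw [charPoly_swap A₁, charPoly_swap A₂]
        exact relPrime_map (MvPolynomial.renameEquiv ℂ (Equiv.swap (0 : Fin 2) 1)).toRingEquiv hco)
      β (by rw [Wmat_swap]; exact hβ) x₁ x₂ hx₁ hx₂ h₁'
    have hz1 : (Delta1 A₁ C₁ A₂ C₂).mulVec (vkron x₁ x₂)
        = l₀ • (Delta0 B₁ C₁ B₂ C₂).mulVec (vkron x₁ x₂) := by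
      rw [Matrix.sub_mulVec, Matrix.smul_mulVec] at hk1
      exact sub_eq_zero.1 hk1
    have hz2 : (Delta2 A₁ B₁ A₂ B₂).mulVec (vkron x₁ x₂)
        = m₀ • (Delta0 B₁ C₁ B₂ C₂).mulVec (vkron x₁ x₂) := by
      have : (Delta2 A₁ B₁ A₂ B₂ - m₀ • Delta0 B₁ C₁ B₂ C₂).mulVec (vkron x₁ x₂) = 0 := by
        rw [delta2_eq, Matrix.neg_mulVec, hk2, neg_zero]
      rw [Matrix.sub_mulVec, Matrix.smul_mulVec] at this
      exact sub_eq_zero.1 this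
    obtain ⟨hR1, hr1⟩ := notRed _ _ l₀ _ hz1 hn1
    obtain ⟨hR2, hr2⟩ := notRed _ _ m₀ _ hz2 (by
      rintro ⟨p, hp, hp0⟩
      refine hn2 ⟨p, fun t => ?_, hp0⟩
      have := hp t
      rwa [delta2_eq, Matrix.neg_mulVec, neg_eq_zero] at this)
    refine ⟨hr1, hr2, vkron x₁ x₂, ?_, hz1, hz2, hR1, hR2⟩
    obtain ⟨i, hi⟩ := Function.ne_iff.1 hx₁
    obtain ⟨j, hj⟩ := Function.ne_iff.1 hx₂
    exact fun h => (mul_ne_zero hi hj) (congrFun h (i, j))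
  · rintro ⟨-, -, z, -, hz1, hz2, hR1, -⟩
    have triv : ∀ l m : ℂ, ∀ q : MvPolynomial (Fin 2) ℂ,
        q ∣ charPoly A₁ B₁ C₁ → q ∣ charPoly A₂ B₂ C₂ →
        (¬ ∃ c : ℂ, q = MvPolynomial.C c) → ev2 q l m ≠ 0 :=
      fun l m q h1 h2 h3 => absurd (hcoprime q h1 h2) h3
    have hW : ∀ l m : ℂ, (Wmat A₁ B₁ C₁ l m).det = 0 → (Wmat A₂ B₂ C₂ l m).det = 0 →
        IsFiniteEigW A₁ B₁ C₁ A₂ B₂ C₂ l m := fun l m e1 e2 =>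
      ⟨triv l m, Matrix.exists_mulVec_eq_zero_iff.2 e1, Matrix.exists_mulVec_eq_zero_iff.2 e2⟩
    by_contra hno
    apply hR1
    apply back_delta A₁ B₁ C₁ A₂ B₂ C₂ l₀ m₀ z
    · intro s hs
      by_contra hc
      push Not at hc
      exact (h5 _ _ (hW _ _ hc.1 hc.2) (by
        intro h; apply hs; simpa using congrArg Prod.fst h)).2 rfl
    · by_contra hc
      push Not at hc
      exact hno (hW _ _ hc.1 hc.2)
    · rw [Matrix.sub_mulVec, Matrix.smul_mulVec, hz1, sub_self]
    · have : (Delta2 A₁ B₁ A₂ B₂ - m₀ • Delta0 B₁ C₁ B₂ C₂).mulVec z = 0 := by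
        rw [Matrix.sub_mulVec, Matrix.smul_mulVec, hz2, sub_self]
      rwa [delta2_eq, Matrix.neg_mulVec, neg_eq_zero] at this
end
end

section
/- Let m, ℓ ≥ 1, let d₁ ≥ d₂ ≥ … ≥ d_m be natural numbers and e₁, …, e_ℓ be natural numbers. Let 1 ≤ p < q ≤ m with d_p = d_{p+1} = … = d_{q−1} ≥ d_q ≥ 1, and define d'_i = d_i for i ∉ {p,q}, d'_p = d_p + 1, d'_q = d_q − 1. If there exists an index j with d_p ≥ e_j ≥ d_q, then ∑_{i=1}^m ∑_{j=1}^ℓ min(d'_i, e_j) < ∑_{i=1}^m ∑_{j=1}^ℓ min(d_i, e_j). -/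
open Finset

/-- **MLW move strictly decreases the kernel count when a block of matching size is
present.** Given antitone block sizes `d₁ ≥ … ≥ d_m`, block sizes `e₁, …, e_ℓ`,
indices `p < q` with `d_p = d_{p+1} = … = d_{q−1} ≥ d_q ≥ 1`, the MLW-perturbed sizes
`d'_p = d_p + 1`, `d'_q = d_q − 1`, `d'_i = d_i` otherwise, and an index `j` with
`d_p ≥ e_j ≥ d_q`, the sum `∑ᵢ∑ⱼ min(d'ᵢ, eⱼ)` is strictly smaller than
`∑ᵢ∑ⱼ min(dᵢ, eⱼ)`. -/
theorem mlw_sum_lt {m ℓ : ℕ} (hm : 1 ≤ m) (hℓ : 1 ≤ ℓ)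
    (d : Fin m → ℕ) (hd : Antitone d) (e : Fin ℓ → ℕ)
    (p q : Fin m) (hpq : p < q)
    (hplateau : ∀ i : Fin m, p ≤ i → i < q → d i = d p)
    (hq1 : 1 ≤ d q)
    (d' : Fin m → ℕ)
    (hd' : ∀ i : Fin m, d' i = if i = p then d p + 1 else if i = q then d q - 1 else d i)
    (hj : ∃ j : Fin ℓ, d q ≤ e j ∧ e j ≤ d p) :
    ∑ i : Fin m, ∑ j : Fin ℓ, min (d' i) (e j) <
      ∑ i : Fin m, ∑ j : Fin ℓ, min (d i) (e j) := by
  have hne : q ≠ p := ne_of_gt hpq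
  have hle : d q ≤ d p := hd hpq.le
  have hp' : d' p = d p + 1 := by simp [hd']
  have hq' : d' q = d q - 1 := by simp [hd', hne]
  have split : ∀ f : Fin m → ℕ,
      ∑ i, f i = f p + (f q + ∑ i ∈ (univ.erase p).erase q, f i) := by
    intro f
    rw [Finset.add_sum_erase _ f (by simp [hne]), Finset.add_sum_erase _ f (mem_univ p)]
  have rest : ∀ j, ∑ i ∈ (univ.erase p).erase q, min (d' i) (e j) =
      ∑ i ∈ (univ.erase p).erase q, min (d i) (e j) := by
    intro j
    refine Finset.sum_congr rfl fun i hi => ?_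
    simp only [mem_erase, mem_univ, and_true] at hi
    rw [hd', if_neg hi.2, if_neg hi.1]
  rw [Finset.sum_comm, Finset.sum_comm (f := fun i j => min (d i) (e j))]
  obtain ⟨j, h1, h2⟩ := hj
  refine Finset.sum_lt_sum (fun j _ => ?_) ⟨j, mem_univ j, ?_⟩
  · rw [split, split (fun i => min (d i) (e j)), rest, hp', hq']
    omega
  · rw [split, split (fun i => min (d i) (e j)), rest, hp', hq']
    omega
end
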